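/- arXiv:1901.04922 — 12 statements merged into one kernel-verified Lean document; each statement's English description precedes it below -/
import Mathlib

section
/- Let m = 2. If there is an infinite run of the p-adic Jacobi–Perron algorithm with complete quotients α_n^{(1)}, α_n^{(2)} and partial quotients a_n^{(1)}, a_n^{(2)} such that 1, α_0^{(1)}, α_0^{(2)} are linearly dependent over ℚ, then v_p(a_n^{(1)}) = −1 for infinitely many n ∈ ℕ (v_p being the p-adic valuation on ℚ). -/
open Finset Filter

/-- `q` belongs to `ℤ[1/p]`. -/
def InZInvP (p : ℕ) (q : ℚ) : Prop := ∃ (z : ℤ) (k : ℕ), q = (z : ℚ) / (p : ℚ) ^ k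

/-- `a` is the Browkin `s`-function value of `x`:
`a ∈ ℤ[1/p]`, `|a|_∞ < p/2` and `|x - a|_p < 1`. -/
def IsSValue (p : ℕ) [Fact p.Prime] (x : ℚ_[p]) (a : ℚ) : Prop :=
  InZInvP p a ∧ |a| < (p : ℚ) / 2 ∧ ‖x - (a : ℚ_[p])‖ < 1

/-- An infinite run of the `p`-adic Jacobi–Perron algorithm with complete quotients
`α n i` and partial quotients `a n i` (`n ≥ 0`, `i = 1,…,m`). -/
def JPRun (p : ℕ) [Fact p.Prime] (m : ℕ) (α : ℕ → ℕ → ℚ_[p]) (a : ℕ → ℕ → ℚ) : Prop :=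
  ∀ n : ℕ,
    (∀ i ∈ Finset.Icc 1 m, IsSValue p (α n i) (a n i)) ∧
    α n m ≠ ((a n m : ℚ) : ℚ_[p]) ∧
    α (n + 1) 1 = (α n m - ((a n m : ℚ) : ℚ_[p]))⁻¹ ∧
    ∀ i ∈ Finset.Icc 2 m,
      α (n + 1) i = (α n (i - 1) - ((a n (i - 1) : ℚ) : ℚ_[p])) / (α n m - ((a n m : ℚ) : ℚ_[p]))

/-- `A : ℤ → ℕ → ℚ` is the family of convergent numerators/denominators attached to the
partial quotients `a`: `A (-j) i = δ_{ij}` for `j = 1,…,m+1`, and for `n ≥ 0`,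
`A n i = Σ_{j=1}^m a n j * A (n-j) i + A (n-m-1) i`. -/
def JPConv (m : ℕ) (a : ℕ → ℕ → ℚ) (A : ℤ → ℕ → ℚ) : Prop :=
  (∀ i ∈ Finset.Icc 1 (m + 1), ∀ j ∈ Finset.Icc 1 (m + 1),
      A (-(j : ℤ)) i = if i = j then 1 else 0) ∧
  (∀ n : ℕ, ∀ i ∈ Finset.Icc 1 (m + 1),
      A n i = (∑ j ∈ Finset.Icc 1 m, a n j * A ((n : ℤ) - j) i) + A ((n : ℤ) - m - 1) i)

/-- The recurrence attached to a linear relation. -/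
def relSeq (a : ℕ → ℕ → ℚ) (x : ℕ → ℚ) : ℕ → ℚ
  | 0 => x 3
  | 1 => x 2
  | 2 => x 1
  | (n + 3) => a n 1 * relSeq a x (n + 2) + a n 2 * relSeq a x (n + 1) + relSeq a x n

theorem relSeq_step (a : ℕ → ℕ → ℚ) (x : ℕ → ℚ) (n : ℕ) :
    relSeq a x (n + 3) =
      a n 1 * relSeq a x (n + 2) + a n 2 * relSeq a x (n + 1) + relSeq a x n := by
  rw [relSeq]

theorem InZInvP.add' {p : ℕ} (hp : p ≠ 0) {q r : ℚ} (hq : InZInvP p q) (hr : InZInvP p r) :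
    InZInvP p (q + r) := by
  obtain ⟨z, k, rfl⟩ := hq
  obtain ⟨w, l, rfl⟩ := hr
  refine ⟨z * p ^ l + w * p ^ k, k + l, ?_⟩
  have : (p : ℚ) ≠ 0 := by exact_mod_cast hp
  push_cast
  field_simp
  try ring

theorem InZInvP.mul' {p : ℕ} (hp : p ≠ 0) {q r : ℚ} (hq : InZInvP p q) (hr : InZInvP p r) :
    InZInvP p (q * r) := by
  obtain ⟨z, k, rfl⟩ := hq
  obtain ⟨w, l, rfl⟩ := hr
  refine ⟨z * w, k + l, ?_⟩
  have : (p : ℚ) ≠ 0 := by exact_mod_cast hp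
  push_cast
  field_simp
  try ring

theorem InZInvP.eq_zero_of_small {p : ℕ} [hp : Fact p.Prime] {q : ℚ} (hq : InZInvP p q) (j : ℕ)
    (h1 : ‖(q : ℚ_[p])‖ * (p : ℝ) ^ j ≤ 1) (h2 : |(q : ℝ)| < (p : ℝ) ^ j) : q = 0 := by
  obtain ⟨z, k, rfl⟩ := hq
  have hp0 : (0 : ℝ) < p := by exact_mod_cast hp.out.pos
  have hz : ‖(z : ℚ_[p])‖ ≤ (p : ℝ) ^ (-((j + k : ℕ) : ℤ)) := by
    push_cast at h1
    rw [norm_div, norm_pow, Padic.norm_p] at h1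
    rw [zpow_neg, zpow_natCast, pow_add]
    rw [inv_pow, div_inv_eq_mul] at h1
    rw [← one_div, le_div_iff₀ (by positivity)]
    linarith
  rw [Padic.norm_int_le_pow_iff_dvd] at hz
  have hz2 : |z| < (p : ℤ) ^ (j + k) := by
    have : |(z : ℝ)| < (p : ℝ) ^ (j + k) := by
      push_cast at h2
      rw [abs_div, abs_of_pos (by positivity : (0 : ℝ) < (p : ℝ) ^ k),
        div_lt_iff₀ (by positivity)] at h2
      rw [pow_add]; exact h2
    exact_mod_cast this
  have : z = 0 := Int.eq_zero_of_abs_lt_dvd (by exact_mod_cast hz) hz2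
  simp [this]

theorem relSeq_growth {p : ℕ} (hp2 : 2 < p) (a : ℕ → ℕ → ℚ) (x : ℕ → ℚ)
    (h1 : ∀ n, |a n 1| < (p : ℚ) / 2) (h2 : ∀ n, |a n 2| < (p : ℚ) / 2) :
    ∃ K : ℝ, 0 ≤ K ∧ ∀ n, |(relSeq a x n : ℝ)| ≤ K * (5 * p / 6 : ℝ) ^ n := by
  have hp3 : (3 : ℝ) ≤ p := by exact_mod_cast hp2
  set K : ℝ := |(x 1 : ℝ)| + |(x 2 : ℝ)| + |(x 3 : ℝ)| with hK
  have e1 := abs_nonneg (x 1 : ℝ)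
  have e2 := abs_nonneg (x 2 : ℝ)
  have e3 := abs_nonneg (x 3 : ℝ)
  have hK0 : 0 ≤ K := by positivity
  set μ : ℝ := 5 * p / 6 with hμ
  have hμ1 : 1 ≤ μ := by rw [hμ]; linarith
  have key : (p : ℝ) / 2 * μ ^ 2 + p / 2 * μ + 1 ≤ μ ^ 3 := by
    have : (p : ℝ) = 6 / 5 * μ := by rw [hμ]; ring
    have h5 : (5 / 2 : ℝ) ≤ μ := by rw [hμ]; linarith
    rw [this]
    nlinarith [mul_nonneg (sub_nonneg.2 h5) (sq_nonneg μ), mul_nonneg (sub_nonneg.2 h5) (by linarith : 0 ≤ μ)]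
  refine ⟨K, hK0, ?_⟩
  have : ∀ n, |(relSeq a x n : ℝ)| ≤ K * μ ^ n ∧ |(relSeq a x (n + 1) : ℝ)| ≤ K * μ ^ (n + 1) ∧
      |(relSeq a x (n + 2) : ℝ)| ≤ K * μ ^ (n + 2) := by
    intro n
    induction n with
    | zero =>
      have t : ∀ m : ℕ, K ≤ K * μ ^ m := fun m =>
        le_mul_of_one_le_right hK0 (one_le_pow₀ hμ1)
      refine ⟨le_trans ?_ (t 0), le_trans ?_ (t 1), le_trans ?_ (t 2)⟩ <;>
        simp only [zero_add, relSeq] <;> linarith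
    | succ n ih =>
      obtain ⟨i0, i1, i2⟩ := ih
      refine ⟨i1, i2, ?_⟩
      have b1 : |(a n 1 : ℝ)| ≤ p / 2 := by
        have := (Rat.cast_le (K := ℝ)).2 (h1 n).le
        push_cast at this
        exact this
      have b2 : |(a n 2 : ℝ)| ≤ p / 2 := by
        have := (Rat.cast_le (K := ℝ)).2 (h2 n).le
        push_cast at this
        exact this
      rw [show n + 1 + 2 = n + 3 from rfl, relSeq_step]
      push_cast
      calc _ ≤ |(a n 1 : ℝ)| * |(relSeq a x (n + 2) : ℝ)| + |(a n 2 : ℝ)| * |(relSeq a x (n + 1) : ℝ)|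
            + |(relSeq a x n : ℝ)| := by
              rw [← abs_mul, ← abs_mul]; exact abs_add_three _ _ _
        _ ≤ (p / 2) * (K * μ ^ (n + 2)) + (p / 2) * (K * μ ^ (n + 1)) + K * μ ^ n := by
              gcongr
        _ = K * μ ^ n * (p / 2 * μ ^ 2 + p / 2 * μ + 1) := by ring
        _ ≤ K * μ ^ n * μ ^ 3 := by gcongr
        _ = _ := by ring
  exact fun n => (this n).1

theorem relSeq_mem {p : ℕ} (hp : p ≠ 0) (a : ℕ → ℕ → ℚ) (x : ℕ → ℚ)
    (h1 : ∀ n, InZInvP p (a n 1)) (h2 : ∀ n, InZInvP p (a n 2)) :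
    ∃ D : ℕ, D ≠ 0 ∧ ∀ n, InZInvP p (D * relSeq a x n) := by
  refine ⟨(x 1).den * (x 2).den * (x 3).den, by simp, ?_⟩
  set D := (x 1).den * (x 2).den * (x 3).den with hD
  have : ∀ n, InZInvP p (D * relSeq a x n) ∧ InZInvP p (D * relSeq a x (n + 1)) ∧
      InZInvP p (D * relSeq a x (n + 2)) := by
    intro n
    induction n with
    | zero =>
      have t1 := Rat.mul_den_eq_num (x 1)
      have t2 := Rat.mul_den_eq_num (x 2)
      have t3 := Rat.mul_den_eq_num (x 3)
      refine ⟨⟨(x 3).num * (x 1).den * (x 2).den, 0, ?_⟩,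
        ⟨(x 2).num * (x 1).den * (x 3).den, 0, ?_⟩, ⟨(x 1).num * (x 2).den * (x 3).den, 0, ?_⟩⟩ <;>
        simp only [zero_add, relSeq, hD] <;> push_cast
      · rw [← t3]; ring
      · rw [← t2]; ring
      · rw [← t1]; ring
    | succ n ih =>
      obtain ⟨i0, i1, i2⟩ := ih
      refine ⟨i1, i2, ?_⟩
      rw [show n + 1 + 2 = n + 3 from rfl, relSeq_step]
      have := (((h1 n).mul' hp i2).add' hp ((h2 n).mul' hp i1)).add' hp i0
      convert this using 1
      ring
  exact fun n => (this n).1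

theorem relSeq_zero (a : ℕ → ℕ → ℚ) (x : ℕ → ℚ) (M : ℕ) (h : ∀ n, M ≤ n → relSeq a x n = 0) :
    ∀ n, relSeq a x n = 0 := by
  induction M with
  | zero => exact fun n => h n (Nat.zero_le n)
  | succ M ih =>
    apply ih
    intro n hn
    rcases hn.eq_or_lt with rfl | hn
    · have := relSeq_step a x M
      rw [h (M + 3) (by omega), h (M + 2) (by omega), h (M + 1) (by omega)] at this
      simpa using this.symm
    · exact h n hn

theorem norm_le_of_lt_one {p : ℕ} [hp : Fact p.Prime] {y : ℚ_[p]} (h : ‖y‖ < 1) :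
    ‖y‖ ≤ (p : ℝ)⁻¹ := by
  have := (Padic.norm_le_pow_iff_norm_lt_pow_add_one y (-1)).2 (by simpa using h)
  simpa using this

/-- For `m = 2`: if there is an infinite run of the `p`-adic Jacobi–Perron
algorithm such that `1, α₀⁽¹⁾, α₀⁽²⁾` are `ℚ`-linearly dependent, then `v_p(aₙ⁽¹⁾) = -1`
for infinitely many `n`. -/
theorem jacobiPerron_dim_two_valuation (p : ℕ) [hp : Fact p.Prime] (hp2 : 2 < p)
    (α : ℕ → ℕ → ℚ_[p]) (a : ℕ → ℕ → ℚ)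
    (hrun : JPRun p 2 α a)
    (hdep : ∃ x : ℕ → ℚ, (∃ i ∈ Finset.Icc 1 3, x i ≠ 0) ∧
      ((x 1 : ℚ) : ℚ_[p]) * α 0 1 + ((x 2 : ℚ) : ℚ_[p]) * α 0 2 + ((x 3 : ℚ) : ℚ_[p]) = 0) :
    {n : ℕ | padicValRat p (a n 1) = -1}.Infinite := by
  obtain ⟨x, hx, hrel⟩ := hdep
  have hpp : 0 < p := hp.out.pos
  have hp0 : (0 : ℝ) < p := by exact_mod_cast hpp
  have hs1 : ∀ n, IsSValue p (α n 1) (a n 1) := fun n => (hrun n).1 1 (by simp)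
  have hs2 : ∀ n, IsSValue p (α n 2) (a n 2) := fun n => (hrun n).1 2 (by simp)
  have hne : ∀ n, α n 2 - (a n 2 : ℚ_[p]) ≠ 0 := fun n => sub_ne_zero.2 (hrun n).2.1
  have hα1 : ∀ n, α (n + 1) 1 = (α n 2 - (a n 2 : ℚ_[p]))⁻¹ := fun n => (hrun n).2.2.1
  have hα2 : ∀ n, α (n + 1) 2 = (α n 1 - (a n 1 : ℚ_[p])) / (α n 2 - (a n 2 : ℚ_[p])) :=
    fun n => (hrun n).2.2.2 2 (by simp)
  set S := relSeq a x with hS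
  have inv : ∀ n, (S (n + 2) : ℚ_[p]) * α n 1 + (S (n + 1) : ℚ_[p]) * α n 2 + (S n : ℚ_[p]) = 0 := by
    intro n
    induction n with
    | zero => simpa [hS, relSeq] using hrel
    | succ n ih =>
      rw [show n + 1 + 2 = n + 3 from rfl, show n + 1 + 1 = n + 2 from rfl, hα1, hα2, hS,
        relSeq_step, ← hS]
      push_cast
      have := hne n
      field_simp
      linear_combination ih
  have contr : ∀ n, (S (n + 3) : ℚ_[p]) = -((S (n + 2) : ℚ_[p]) * (α n 1 - (a n 1 : ℚ_[p]))
      + (S (n + 1) : ℚ_[p]) * (α n 2 - (a n 2 : ℚ_[p]))) := by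
    intro n
    rw [hS, relSeq_step, ← hS]
    push_cast
    linear_combination inv n
  intro hfin
  obtain ⟨N, hN⟩ := hfin.bddAbove
  have hbig : ∀ n, N ≤ n → ‖α n 2 - (a n 2 : ℚ_[p])‖ ≤ (p : ℝ)⁻¹ * (p : ℝ)⁻¹ := by
    intro n hn
    have hlt := (hs2 n).2.2
    have hpos : 0 < ‖α n 2 - (a n 2 : ℚ_[p])‖ := norm_pos_iff.2 (hne n)
    have hα : ‖α (n + 1) 1‖ = ‖α n 2 - (a n 2 : ℚ_[p])‖⁻¹ := by rw [hα1, norm_inv]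
    have hα' : 1 < ‖α (n + 1) 1‖ := by rw [hα]; exact (one_lt_inv₀ hpos).2 hlt
    have hna : ‖(a (n + 1) 1 : ℚ_[p])‖ = ‖α (n + 1) 1‖ := by
      have h3 := (hs1 (n + 1)).2.2
      have h4 := IsUltrametricDist.norm_add_eq_max_of_norm_ne_norm
        (x := α (n + 1) 1) (y := -(α (n + 1) 1 - (a (n + 1) 1 : ℚ_[p])))
        (by rw [norm_neg]; exact (h3.trans hα').ne')
      rw [norm_neg, max_eq_left (h3.trans hα').le] at h4
      rw [← h4]; congr 1; ring
    have ha0 : a (n + 1) 1 ≠ 0 := by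
      intro h0
      rw [h0] at hna
      rw [← hna, Rat.cast_zero, norm_zero] at hα'
      linarith
    have hv : padicValRat p (a (n + 1) 1) ≠ -1 := fun h => by
      have := hN h
      omega
    have hnorm : ‖(a (n + 1) 1 : ℚ_[p])‖ = (p : ℝ) ^ (-padicValRat p (a (n + 1) 1)) := by
      rw [Padic.eq_padicNorm, padicNorm.eq_zpow_of_nonzero ha0]
      push_cast
      rfl
    have hp1 : (1 : ℝ) < p := by exact_mod_cast hp.out.one_lt
    have hv2 : 2 ≤ -padicValRat p (a (n + 1) 1) := by
      rw [← hna, hnorm, one_lt_zpow_iff_right₀ hp1] at hα'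
      omega
    have h5 : (p : ℝ) ^ 2 ≤ ‖α n 2 - (a n 2 : ℚ_[p])‖⁻¹ := by
      rw [← hα, ← hna, hnorm, ← zpow_natCast]
      exact zpow_le_zpow_right₀ hp1.le (by exact_mod_cast hv2)
    rw [← mul_inv, ← sq]
    exact (le_inv_comm₀ (by positivity) hpos).1 h5
  -- p-adic decay
  obtain ⟨C, hC⟩ : ∃ C : ℝ, ∀ n, N + 1 ≤ n → ‖(S n : ℚ_[p])‖ * (p : ℝ) ^ n ≤ C := by
    set C := max (‖(S (N + 1) : ℚ_[p])‖ * (p : ℝ) ^ (N + 1))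
      (‖(S (N + 2) : ℚ_[p])‖ * (p : ℝ) ^ (N + 2)) with hCdef
    refine ⟨C, ?_⟩
    have : ∀ k, ‖(S (N + k + 1) : ℚ_[p])‖ * (p : ℝ) ^ (N + k + 1) ≤ C ∧
        ‖(S (N + k + 2) : ℚ_[p])‖ * (p : ℝ) ^ (N + k + 2) ≤ C := by
      intro k
      induction k with
      | zero => exact ⟨le_max_left _ _, le_max_right _ _⟩
      | succ k ih =>
        obtain ⟨i1, i2⟩ := ih
        refine ⟨i2, ?_⟩
        rw [show N + (k + 1) + 2 = N + k + 3 by ring, contr, norm_neg]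
        have hu := IsUltrametricDist.norm_add_le_max
          ((S (N + k + 2) : ℚ_[p]) * (α (N + k) 1 - (a (N + k) 1 : ℚ_[p])))
          ((S (N + k + 1) : ℚ_[p]) * (α (N + k) 2 - (a (N + k) 2 : ℚ_[p])))
        refine le_trans (mul_le_mul_of_nonneg_right hu (by positivity)) ?_
        rw [max_mul_of_nonneg _ _ (by positivity), norm_mul, norm_mul]
        apply max_le
        · refine le_trans ?_ i2
          calc _ ≤ ‖(S (N + k + 2) : ℚ_[p])‖ * (p : ℝ)⁻¹ * (p : ℝ) ^ (N + k + 3) := by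
                gcongr
                exact norm_le_of_lt_one (hs1 _).2.2
            _ = _ := by rw [pow_succ (p : ℝ) (N + k + 2)]; field_simp
        · refine le_trans ?_ i1
          calc _ ≤ ‖(S (N + k + 1) : ℚ_[p])‖ * ((p : ℝ)⁻¹ * (p : ℝ)⁻¹) * (p : ℝ) ^ (N + k + 3) := by
                gcongr
                exact hbig _ (by omega)
            _ = _ := by
                rw [pow_succ (p : ℝ) (N + k + 2), pow_succ (p : ℝ) (N + k + 1)]; field_simp
    intro n hn
    have h := (this (n - (N + 1))).1
    rwa [show N + (n - (N + 1)) + 1 = n by omega] at h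
  obtain ⟨K, hK0, hK⟩ := relSeq_growth hp2 a x (fun n => (hs1 n).2.1) (fun n => (hs2 n).2.1)
  obtain ⟨D, hD0, hD⟩ := relSeq_mem hpp.ne' a x (fun n => (hs1 n).1) (fun n => (hs2 n).1)
  obtain ⟨c, hc⟩ := pow_unbounded_of_one_lt C (by exact_mod_cast hp.out.one_lt : (1 : ℝ) < p)
  have hev : ∀ᶠ n : ℕ in atTop, (D * K * (p : ℝ) ^ c) * (5 / 6 : ℝ) ^ n < 1 := by
    have := (tendsto_pow_atTop_nhds_zero_of_lt_one (by norm_num : (0 : ℝ) ≤ 5 / 6)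
      (by norm_num)).const_mul (D * K * (p : ℝ) ^ c)
    rw [mul_zero] at this
    exact this.eventually_lt_const one_pos
  obtain ⟨M, hM⟩ := eventually_atTop.1 hev
  have hzero : ∀ n, M + N + 1 + c ≤ n → S n = 0 := by
    intro n hn
    obtain ⟨j, rfl⟩ : ∃ j, n = c + j := ⟨n - c, by omega⟩
    have hz : (D : ℚ) * S (c + j) = 0 := by
      apply (hD (c + j)).eq_zero_of_small (p := p) j
      · have h1 := hC (c + j) (by omega)
        push_cast
        rw [norm_mul]
        have hDn : ‖(D : ℚ_[p])‖ ≤ 1 := by exact_mod_cast Padic.norm_int_le_one (p := p) (D : ℤ)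
        have h2 : ‖(S (c + j) : ℚ_[p])‖ * (p : ℝ) ^ j * (p : ℝ) ^ c ≤ 1 * (p : ℝ) ^ c := by
          rw [pow_add] at h1
          linarith
        have h3 := le_of_mul_le_mul_right h2 (by positivity)
        calc _ ≤ 1 * ‖(S (c + j) : ℚ_[p])‖ * (p : ℝ) ^ j := by gcongr
          _ ≤ 1 := by linarith
      · have h1 := hM (c + j) (by omega)
        push_cast
        rw [abs_mul, Nat.abs_cast]
        calc _ ≤ (D : ℝ) * (K * (5 * p / 6 : ℝ) ^ (c + j)) := by gcongr; exact hK _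
          _ = (D * K * (p : ℝ) ^ c) * (5 / 6 : ℝ) ^ (c + j) * (p : ℝ) ^ j := by
            rw [show (5 * p / 6 : ℝ) = 5 / 6 * p by ring, mul_pow, pow_add (p : ℝ)]; ring
          _ < 1 * (p : ℝ) ^ j := by gcongr
          _ = _ := one_mul _
    exact (mul_eq_zero.1 hz).resolve_left (by exact_mod_cast hD0)
  have hall := relSeq_zero a x _ hzero
  obtain ⟨i, hi, hxi⟩ := hx
  rw [Finset.mem_Icc] at hi
  have h0 := hall 0
  have h1 := hall 1
  have h2 := hall 2
  simp only [relSeq] at h0 h1 h2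
  obtain ⟨hi1, hi2⟩ := hi
  interval_cases i <;> simp_all
end

section
/- For a purely periodic run of the p-adic Jacobi–Perron algorithm with period N, the matrix 𝓜, regarded as a matrix over ℚ_p, satisfies 𝓜 · v = μ · v, where v = (α_0^{(1)}, …, α_0^{(m)}, 1)^T ∈ ℚ_p^{m+1} and μ = α_0^{(1)} α_1^{(1)} ⋯ α_{N-1}^{(1)}; in particular μ is a root of the characteristic polynomial P(X), i.e. P(μ) = 0 in ℚ_p. -/
open Finset Filter

lemma jp_step (p k : ℕ) [Fact p.Prime]
    (α : ℕ → ℕ → ℚ_[p]) (a : ℕ → ℕ → ℚ) (A : ℤ → ℕ → ℚ)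
    (hrun : JPRun p (k + 1) α a) (hconv : JPConv (k + 1) a A) (i : ℕ)
    (hi : i ∈ Finset.Icc 1 (k + 1 + 1)) (n : ℕ) :
    (∑ j ∈ range (k + 1), α (n + 1) (j + 1) * (A (((n + 1 : ℕ) : ℤ) - ((j : ℕ) + 1)) i : ℚ_[p]))
      + (A (((n + 1 : ℕ) : ℤ) - ((k + 1 : ℕ) + 1)) i : ℚ_[p])
    = α (n + 1) 1 * ((∑ j ∈ range (k + 1), α n (j + 1) * (A ((n : ℤ) - ((j : ℕ) + 1)) i : ℚ_[p]))
      + (A ((n : ℤ) - ((k + 1 : ℕ) + 1)) i : ℚ_[p])) := by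
  obtain ⟨-, hne, h1, h2⟩ := hrun n
  have hA := hconv.2 n i hi
  have hd : α n (k + 1) - ((a n (k + 1) : ℚ) : ℚ_[p]) ≠ 0 := sub_ne_zero.mpr hne
  have hA' : (A n i : ℚ_[p]) = (∑ j ∈ range (k + 1),
      (a n (j + 1) : ℚ_[p]) * (A ((n : ℤ) - ((j : ℕ) + 1)) i : ℚ_[p]))
      + (A ((n : ℤ) - ((k + 1 : ℕ) + 1)) i : ℚ_[p]) := by
    rw [hA, ← Finset.Ico_add_one_right_eq_Icc, Finset.sum_Ico_eq_sum_range]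
    push_cast
    congr 1
    · apply Finset.sum_congr (by simp)
      intro j _
      rw [add_comm 1 j, add_comm (1 : ℤ) j]
    · congr 2
      ring
  have h2' : ∀ j ∈ range k, α (n + 1) (j + 1 + 1) *
      (A (((n + 1 : ℕ) : ℤ) - (((j + 1 : ℕ) : ℤ) + 1)) i : ℚ_[p]) =
      (α n (k + 1) - ((a n (k + 1) : ℚ) : ℚ_[p]))⁻¹ *
        ((α n (j + 1) - (a n (j + 1) : ℚ_[p])) * (A ((n : ℤ) - ((j : ℕ) + 1)) i : ℚ_[p])) := by
    intro j hj
    have hj' := Finset.mem_range.mp hj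
    rw [h2 (j + 1 + 1) (by simp; omega)]
    have : (((n + 1 : ℕ) : ℤ) - (((j + 1 : ℕ) : ℤ) + 1)) = (n : ℤ) - ((j : ℕ) + 1) := by
      push_cast; ring
    rw [this]
    simp only [Nat.add_sub_cancel]
    ring
  rw [Finset.sum_range_succ', Finset.sum_congr rfl h2', ← Finset.mul_sum]
  have e0 : (((n + 1 : ℕ) : ℤ) - (((0 : ℕ) : ℤ) + 1)) = n := by push_cast; ring
  have e1 : (((n + 1 : ℕ) : ℤ) - (((k + 1 : ℕ) : ℤ) + 1)) = (n : ℤ) - ((k : ℕ) + 1) := by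
    push_cast; ring
  rw [e0, e1, hA', zero_add, h1, Finset.sum_range_succ, Finset.sum_range_succ]
  simp only [sub_mul, Finset.sum_sub_distrib]
  field_simp
  ring

/-- For a purely periodic run of the `p`-adic Jacobi–Perron algorithm with
period `N`, the matrix `𝓜` (over `ℚ_p`) satisfies `𝓜 ⬝ v = μ • v` where
`v = (α₀⁽¹⁾, …, α₀⁽ᵐ⁾, 1)ᵀ` and `μ = α₀⁽¹⁾α₁⁽¹⁾⋯α_{N-1}⁽¹⁾`; in particular `P(μ) = 0`. -/
theorem jacobiPerron_periodic_eigenvalue (p m N : ℕ) [hp : Fact p.Prime]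
    (hp2 : 2 < p) (hm : 1 ≤ m) (hN : 1 ≤ N)
    (α : ℕ → ℕ → ℚ_[p]) (a : ℕ → ℕ → ℚ) (A : ℤ → ℕ → ℚ)
    (hrun : JPRun p m α a) (hconv : JPConv m a A)
    (hper : ∀ n : ℕ, ∀ i ∈ Finset.Icc 1 m, α (n + N) i = α n i ∧ a (n + N) i = a n i)
    (M : Matrix (Fin (m + 1)) (Fin (m + 1)) ℚ)
    (hM : ∀ i j : Fin (m + 1), M i j = A ((N : ℤ) - ((j : ℕ) + 1)) ((i : ℕ) + 1))
    (v : Fin (m + 1) → ℚ_[p])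
    (hv : ∀ i : Fin (m + 1), v i = if (i : ℕ) < m then α 0 ((i : ℕ) + 1) else 1)
    (μ : ℚ_[p]) (hμ : μ = ∏ j ∈ Finset.range N, α j 1) :
    (M.map (fun q : ℚ => (q : ℚ_[p]))).mulVec v = μ • v ∧
      Polynomial.aeval μ (Matrix.charpoly M) = 0 := by
  obtain ⟨k, rfl⟩ : ∃ k, m = k + 1 := ⟨m - 1, by omega⟩
  have hprod : ∏ j ∈ Finset.range N, α (j + 1) 1 = ∏ j ∈ Finset.range N, α j 1 := by
    obtain ⟨N, rfl⟩ : ∃ k, N = k + 1 := ⟨N - 1, by omega⟩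
    rw [Finset.prod_range_succ, Finset.prod_range_succ' (fun j => α j 1)]
    have := (hper 0 1 (by simp)).1
    rw [zero_add] at this
    rw [this]
  have key : ∀ i ∈ Finset.Icc 1 (k + 1 + 1), ∀ n : ℕ,
      (∑ j ∈ range (k + 1), α n (j + 1) * (A ((n : ℤ) - ((j : ℕ) + 1)) i : ℚ_[p]))
      + (A ((n : ℤ) - ((k + 1 : ℕ) + 1)) i : ℚ_[p]) =
      (∏ j ∈ Finset.range n, α (j + 1) 1) * (if i - 1 < k + 1 then α 0 i else 1) := by
    intro i hi n
    induction n with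
    | zero =>
      have h0 : ∀ j : ℕ, j < k + 1 + 1 →
          A (((0 : ℕ) : ℤ) - ((j : ℕ) + 1)) i = if i = j + 1 then 1 else 0 := by
        intro j hj
        rw [← hconv.1 i hi (j + 1) (by simp; omega)]
        congr 1
      obtain ⟨l, rfl⟩ : ∃ l, i = l + 1 := ⟨i - 1, by simp at hi; omega⟩
      have hl : l < k + 1 + 1 := by simp at hi; omega
      rw [h0 (k + 1) (by omega), Finset.sum_congr rfl (g := fun j => if l = j then α 0 (j + 1) else 0)]
      · rw [Finset.sum_ite_eq]
        by_cases h : l < k + 1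
        · have : l ≠ k + 1 := by omega
          simp [h, this]
        · have : l = k + 1 := by omega
          simp [this]
      · intro j hj
        rw [h0 j (by have := Finset.mem_range.mp hj; omega)]
        by_cases h : l = j <;> simp [h]
    | succ n ih =>
      rw [jp_step p k α a A hrun hconv i hi n, ih, Finset.prod_range_succ]
      ring
  have hvec : (M.map (fun q : ℚ => (q : ℚ_[p]))).mulVec v = μ • v := by
    funext i
    have hk := key (i + 1) (by simp; omega) N
    rw [hprod, ← hμ] at hk
    simp only [Nat.add_sub_cancel] at hk
    rw [Pi.smul_apply, smul_eq_mul, hv i, ← hk]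
    simp only [Matrix.mulVec, dotProduct, Matrix.map_apply, hM, hv]
    rw [Fin.sum_univ_castSucc, ← Fin.sum_univ_eq_sum_range
      (fun j => α N (j + 1) * (A ((N : ℤ) - ((j : ℕ) + 1)) (i + 1) : ℚ_[p]))]
    congr 1
    · apply Finset.sum_congr rfl
      intro j _
      have := (hper 0 (j + 1) (by simp; omega)).1
      rw [zero_add] at this
      have hj : (j : ℕ) < k + 1 := j.isLt
      simp only [Fin.val_castSucc, hj, if_true, this, mul_comm]
    · simp
  refine ⟨hvec, ?_⟩
  have hv0 : v ≠ 0 := by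
    intro h
    have := congrFun h (Fin.last (k + 1))
    rw [hv] at this
    simp at this
  have hmap : (M.map (fun q : ℚ => (q : ℚ_[p]))) = M.map (algebraMap ℚ ℚ_[p]) := by
    ext i j; simp
  rw [Polynomial.aeval_def, ← Polynomial.eval_map, ← Matrix.charpoly_map, Matrix.eval_charpoly]
  apply Matrix.exists_mulVec_eq_zero_iff.mp
  refine ⟨v, hv0, ?_⟩
  rw [Matrix.sub_mulVec, ← hmap, hvec]
  funext i
  simp [Matrix.scalar_apply, Matrix.mulVec_diagonal]
end

section
/- For a purely periodic run of the p-adic Jacobi–Perron algorithm with period N, the number μ = α_0^{(1)} α_1^{(1)} ⋯ α_{N-1}^{(1)} is the root of the characteristic polynomial P(X) that is greatest in p-adic norm: every root z ∈ K of P(X) with z ≠ μ satisfies ‖z‖ < ‖μ‖. -/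
open Finset Filter

/-- Abstract core: a solution of the periodic recurrence which is multiplied by `z ≠ μ` over a
period has `‖z‖ < 1`. -/
lemma jp_core {K : Type*} [NormedField K] [IsUltrametricDist K] (l N : ℕ) (hN : 1 ≤ N)
    (α b : ℕ → ℕ → K) (U : ℕ → K) (z : K)
    (h1 : ∀ n, α (n + 1) 0 * (α n l - b n l) = 1)
    (h2 : ∀ n, ∀ j < l, α (n + 1) (j + 1) = α (n + 1) 0 * (α n j - b n j))
    (he : ∀ n, ∀ j < l + 1, ‖α n j - b n j‖ < 1)
    (hpa : ∀ n, ∀ j < l + 1, α (n + N) j = α n j)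
    (hpb : ∀ n, ∀ j < l + 1, b (n + N) j = b n j)
    (hU : ∀ n, U (n + l + 2) = ∑ j ∈ range (l + 1), b n j * U (n + l + 1 - j) + U n)
    (hz : ∀ k < l + 2, U (k + N) = z * U k)
    (hzμ : z ≠ ∏ j ∈ range N, α j 0)
    (hne : ∃ k < l + 2, U k ≠ 0) : ‖z‖ < 1 := by
  -- scaling for all indices
  have hzall : ∀ k, U (k + N) = z * U k := by
    intro k
    induction k using Nat.strong_induction_on with
    | _ k ih =>
      by_cases hk : k < l + 2
      · exact hz k hk
      · obtain ⟨n, rfl⟩ : ∃ n, k = n + l + 2 := ⟨k - (l + 2), by omega⟩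
        have e : n + l + 2 + N = (n + N) + l + 2 := by omega
        rw [e, hU (n + N), hU n, ih n (by omega), mul_add, Finset.mul_sum]
        congr 1
        refine Finset.sum_congr rfl fun j hj => ?_
        have hj' := Finset.mem_range.1 hj
        have e2 : n + N + l + 1 - j = (n + l + 1 - j) + N := by omega
        rw [e2, ih _ (by omega), hpb n j hj']
        ring
  set S : ℕ → K := fun n => ∑ j ∈ range (l + 1), α n j * U (n + l + 1 - j) + U n with hS
  have hSe : ∀ n, S n = U (n + l + 2) + ∑ j ∈ range (l + 1), (α n j - b n j) * U (n + l + 1 - j) := by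
    intro n
    simp only [hS, hU n, sub_mul, Finset.sum_sub_distrib]
    ring
  have hSs : ∀ n, S (n + 1) = α (n + 1) 0 * S n := by
    intro n
    rw [hSe n, Finset.sum_range_succ]
    simp only [hS]
    rw [Finset.sum_range_succ', mul_add, mul_add, Finset.mul_sum]
    have e1 : n + 1 + l + 1 - 0 = n + l + 2 := by omega
    have e2 : n + l + 1 - l = n + 1 := by omega
    rw [e1, e2, ← mul_assoc (α (n+1) 0) (α n l - b n l), h1 n]
    have : ∑ k ∈ range l, α (n + 1) (k + 1) * U (n + 1 + l + 1 - (k + 1)) =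
        ∑ i ∈ range l, α (n + 1) 0 * ((α n i - b n i) * U (n + l + 1 - i)) := by
      refine Finset.sum_congr rfl fun j hj => ?_
      have e : n + 1 + l + 1 - (j + 1) = n + l + 1 - j := by omega
      rw [h2 n j (Finset.mem_range.1 hj), e]
      ring
    rw [this]
    ring
  have hSp : ∀ n, S n = (∏ j ∈ range n, α (j + 1) 0) * S 0 := by
    intro n
    induction n with
    | zero => simp
    | succ n ih => rw [hSs, ih, Finset.prod_range_succ]; ring
  have hprod : ∏ j ∈ range N, α (j + 1) 0 = ∏ j ∈ range N, α j 0 := by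
    have h0 : α 0 0 ≠ 0 := by
      have := hpa 0 0 (by omega)
      rw [← this]
      obtain ⟨N', rfl⟩ : ∃ N', N = N' + 1 := ⟨N - 1, by omega⟩
      rw [zero_add]
      exact left_ne_zero_of_mul_eq_one (h1 N')
    have h := Finset.prod_range_succ' (fun j => α j 0) N
    rw [Finset.prod_range_succ] at h
    have h3 := hpa 0 0 (by omega)
    rw [zero_add] at h3
    rw [h3] at h
    exact (mul_right_cancel₀ h0 h).symm
  have hSN : S N = z * S 0 := by
    simp only [hS]
    rw [mul_add, Finset.mul_sum, ← hzall 0, zero_add N]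
    congr 1
    refine Finset.sum_congr rfl fun j hj => ?_
    have hj' := Finset.mem_range.1 hj
    have e : N + l + 1 - j = (0 + l + 1 - j) + N := by omega
    have := hpa 0 j hj'
    rw [zero_add] at this
    rw [e, hzall, this]
    ring
  have hS0 : S 0 = 0 := by
    by_contra h
    apply hzμ
    rw [hSp N, hprod] at hSN
    exact (mul_right_cancel₀ h hSN).symm
  have hrec : ∀ n, U (n + l + 2) = - ∑ j ∈ range (l + 1), (α n j - b n j) * U (n + l + 1 - j) := by
    intro n
    have h := hSe n
    rw [hSp n, hS0, mul_zero] at h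
    exact eq_neg_of_add_eq_zero_left h.symm
  -- maximum over the initial window
  obtain ⟨j0, hj0, hmax⟩ := Finset.exists_max_image (range (l + 1)) (fun j => ‖U (j + 1)‖)
    ⟨0, by simp⟩
  have hC : 0 < ‖U (j0 + 1)‖ := by
    rcases (norm_nonneg (U (j0 + 1))).eq_or_lt' with h | h
    · exfalso
      have hz1 : ∀ j < l + 1, U (j + 1) = 0 := fun j hj => by
        have := hmax j (Finset.mem_range.2 hj)
        simp only [h] at this
        exact norm_le_zero_iff.1 this
      have hz0 : U 0 = 0 := by
        have := hS0
        simp only [hS] at this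
        rw [Finset.sum_eq_zero, zero_add] at this
        · exact this
        · intro j hj
          have hj' := Finset.mem_range.1 hj
          have e : 0 + l + 1 - j = (l - j) + 1 := by omega
          rw [e, hz1 _ (by omega), mul_zero]
      obtain ⟨k, hk, hk0⟩ := hne
      rcases k with _ | k
      · exact hk0 hz0
      · exact hk0 (hz1 k (by omega))
    · exact h
  have hbd : ∀ k, ‖U (k + 1)‖ ≤ ‖U (j0 + 1)‖ ∧ (l + 1 ≤ k → ‖U (k + 1)‖ < ‖U (j0 + 1)‖) := by
    intro k
    induction k using Nat.strong_induction_on with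
    | _ k ih =>
      by_cases hk : k < l + 1
      · exact ⟨hmax k (Finset.mem_range.2 hk), fun h => by omega⟩
      · suffices h : ‖U (k + 1)‖ < ‖U (j0 + 1)‖ from ⟨h.le, fun _ => h⟩
        obtain ⟨n, rfl⟩ : ∃ n, k = n + l + 1 := ⟨k - (l + 1), by omega⟩
        rw [hrec n, norm_neg]
        obtain ⟨i, hi, hle⟩ := IsUltrametricDist.exists_norm_finsetSum_le_of_nonempty
          (t := range (l + 1)) ⟨0, by simp⟩ (fun j => (α n j - b n j) * U (n + l + 1 - j))
        refine hle.trans_lt ?_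
        have hi' := Finset.mem_range.1 hi
        have e : n + l + 1 - i = (n + l - i) + 1 := by omega
        rw [norm_mul, e]
        calc _ ≤ ‖α n i - b n i‖ * ‖U (j0 + 1)‖ :=
              mul_le_mul_of_nonneg_left (ih _ (by omega)).1 (norm_nonneg _)
          _ < 1 * ‖U (j0 + 1)‖ := mul_lt_mul_of_pos_right (he n i hi') hC
          _ = _ := one_mul _
  have hpow : ∀ r k, U (k + r * N) = z ^ r * U k := by
    intro r
    induction r with
    | zero => intro k; simp
    | succ r ih =>
      intro k
      have e : k + (r + 1) * N = (k + r * N) + N := by ring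
      rw [e, hzall, ih]; ring
  have hfin : ‖z‖ ^ (l + 1) * ‖U (j0 + 1)‖ < ‖U (j0 + 1)‖ := by
    rw [← norm_pow, ← norm_mul, ← hpow]
    have e : j0 + 1 + (l + 1) * N = (j0 + (l + 1) * N) + 1 := by ring
    rw [e]
    refine (hbd _).2 ?_
    nlinarith
  by_contra hcon
  have : 1 ≤ ‖z‖ ^ (l + 1) := one_le_pow₀ (not_lt.1 hcon)
  nlinarith

theorem jacobiPerron_periodic_dominant_root (p m N : ℕ) [hp : Fact p.Prime]
    (hp2 : 2 < p) (hm : 1 ≤ m) (hN : 1 ≤ N)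
    (α : ℕ → ℕ → ℚ_[p]) (a : ℕ → ℕ → ℚ) (A : ℤ → ℕ → ℚ)
    (hrun : JPRun p m α a) (hconv : JPConv m a A)
    (hper : ∀ n : ℕ, ∀ i ∈ Finset.Icc 1 m, α (n + N) i = α n i ∧ a (n + N) i = a n i)
    (M : Matrix (Fin (m + 1)) (Fin (m + 1)) ℚ)
    (hM : ∀ i j : Fin (m + 1), M i j = A ((N : ℤ) - ((j : ℕ) + 1)) ((i : ℕ) + 1))
    (μ : ℚ_[p]) (hμ : μ = ∏ j ∈ Finset.range N, α j 1)
    (K : Type) [NormedField K] [Algebra ℚ_[p] K] [IsAlgClosure ℚ_[p] K]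
    (hext : ∀ x : ℚ_[p], ‖algebraMap ℚ_[p] K x‖ = ‖x‖)
    (z : K)
    (hz : Polynomial.aeval z ((Matrix.charpoly M).map (algebraMap ℚ ℚ_[p])) = 0)
    (hzμ : z ≠ algebraMap ℚ_[p] K μ) :
    ‖z‖ < ‖algebraMap ℚ_[p] K μ‖ := by
  haveI : IsUltrametricDist K := by
    apply IsUltrametricDist.isUltrametricDist_of_forall_norm_natCast_le_one
    intro n
    have h := hext (n : ℚ_[p])
    rw [map_natCast] at h
    rw [h]
    simpa using Padic.norm_int_le_one (p := p) (n : ℤ)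
  obtain ⟨l, rfl⟩ : ∃ l, m = l + 1 := ⟨m - 1, by omega⟩
  set f := algebraMap ℚ_[p] K with hf
  set c : ℚ →+* K := f.comp (algebraMap ℚ ℚ_[p]) with hc
  have hcf : ∀ q : ℚ, c q = f (q : ℚ_[p]) := fun q => by
    simp [hc]
  -- norm of μ
  have hα1 : ∀ n, 1 ≤ ‖α n 1‖ := by
    have key : ∀ n, 1 ≤ ‖α (n + 1) 1‖ := by
      intro n
      obtain ⟨hs, hn, h1, -⟩ := hrun n
      have h3 := (hs (l + 1) (by simp)).2.2
      rw [h1, norm_inv]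
      exact (one_le_inv₀ (norm_pos_iff.2 (sub_ne_zero.2 hn))).2 h3.le
    intro n
    rw [← (hper n 1 (by simp)).1]
    obtain ⟨N', rfl⟩ : ∃ N', N = N' + 1 := ⟨N - 1, by omega⟩
    exact key (n + N')
  have hμ1 : 1 ≤ ‖f μ‖ := by
    rw [hext, hμ, norm_prod]
    exact Finset.prod_induction _ (fun x : ℝ => 1 ≤ x) (fun _ _ => one_le_mul_of_one_le_of_one_le) le_rfl (fun i _ => hα1 i)
  refine lt_of_lt_of_le ?_ hμ1
  -- left eigenvector
  have hdet : (Matrix.scalar (Fin (l + 1 + 1)) z - M.map c).det = 0 := by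
    rw [← Matrix.eval_charpoly, Matrix.charpoly_map, Polynomial.eval_map]
    rw [Polynomial.aeval_def, Polynomial.eval₂_map] at hz
    exact hz
  obtain ⟨w, hw0, hw⟩ := Matrix.exists_vecMul_eq_zero_iff.2 hdet
  have hw' : ∀ j, ∑ i, w i * c (M i j) = z * w j := by
    intro j
    have := congrFun hw j
    rw [Matrix.vecMul_sub, Pi.sub_apply, Pi.zero_apply, sub_eq_zero] at this
    rw [Matrix.scalar_apply, Matrix.vecMul_diagonal] at this
    rw [mul_comm z, this]
    simp [Matrix.vecMul, dotProduct]
  obtain ⟨hA0, hA⟩ := hconv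
  set U : ℕ → K := fun k => ∑ i : Fin (l + 1 + 1), w i * c (A ((k : ℤ) - (l + 2)) ((i : ℕ) + 1)) with hUdef
  have hU0 : ∀ k (hk : k < l + 2), U k = w ⟨l + 1 - k, by omega⟩ := by
    intro k hk
    simp only [hUdef]
    rw [Finset.sum_eq_single ⟨l + 1 - k, by omega⟩]
    · have e : ((k : ℤ) - (l + 2)) = -((l + 1 - k + 1 : ℕ) : ℤ) := by omega
      rw [e, hA0 _ (by simp) _ (by simp)]
      simp
    · intro i _ hi
      have e : ((k : ℤ) - (l + 2)) = -((l + 1 - k + 1 : ℕ) : ℤ) := by omega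
      have hi2 := i.2
      rw [e, hA0 _ (by simp; omega) _ (by simp)]
      have : ¬ ((i : ℕ) + 1 = l + 1 - k + 1) := fun h => hi (Fin.ext (by simp; omega))
      rw [if_neg this, map_zero, mul_zero]
    · simp
  refine jp_core l N hN (fun n j => f (α n (j + 1))) (fun n j => c (a n (j + 1))) U z
    ?_ ?_ ?_ ?_ ?_ ?_ ?_ ?_ ?_
  · intro n
    obtain ⟨hs, hn, h1, -⟩ := hrun n
    simp only [hcf, zero_add]
    rw [← map_sub, ← map_mul, h1, inv_mul_cancel₀ (sub_ne_zero.2 hn), map_one]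
  · intro n j hj
    obtain ⟨hs, hn, h1, h2⟩ := hrun n
    simp only [hcf, zero_add]
    rw [← map_sub, ← map_mul, h1, h2 (j + 1 + 1) (by simp; omega), div_eq_inv_mul]
    simp
  · intro n j hj
    have h3 := ((hrun n).1 (j + 1) (by simp; omega)).2.2
    simp only [hcf]
    rwa [← map_sub, hext]
  · intro n j hj
    simp only [(hper n (j + 1) (by simp; omega)).1]
  · intro n j hj
    simp only [(hper n (j + 1) (by simp; omega)).2]
  · intro n
    simp only [hUdef]
    have hstep : ∀ i : Fin (l + 1 + 1), A (((n + l + 2 : ℕ) : ℤ) - (l + 2)) ((i : ℕ) + 1) =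
        ∑ j ∈ range (l + 1), a n (j + 1) * A (((n + l + 1 - j : ℕ) : ℤ) - (l + 2)) ((i : ℕ) + 1)
          + A ((n : ℤ) - (l + 2)) ((i : ℕ) + 1) := by
      intro i
      have e : (((n + l + 2 : ℕ) : ℤ) - (l + 2)) = (n : ℤ) := by push_cast; ring
      have hi2 := i.2
      rw [e, hA n _ (by simp; omega)]
      congr 1
      · rw [← Finset.Ico_add_one_right_eq_Icc, Finset.sum_Ico_eq_sum_range]
        refine Finset.sum_congr (by simp) fun j hj => ?_
        have hj' := Finset.mem_range.1 hj
        rw [add_comm 1 j]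
        congr 2
        omega
      · congr 1
        push_cast; ring
    simp only [hstep, map_add, map_sum, map_mul, mul_add, Finset.sum_add_distrib, Finset.mul_sum]
    congr 1
    rw [Finset.sum_comm]
    refine Finset.sum_congr rfl fun j _ => Finset.sum_congr rfl fun i _ => ?_
    ring
  · intro k hk
    have h := hw' ⟨l + 1 - k, by omega⟩
    rw [hU0 k hk, ← h]
    simp only [hUdef]
    refine Finset.sum_congr rfl fun i _ => ?_
    rw [hM]
    congr 3
    simp only
    omega
  · simp only [zero_add]
    rw [← map_prod, ← hμ]
    exact hzμ
  · obtain ⟨i, hi⟩ := Function.ne_iff.1 hw0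
    have hi2 := i.2
    refine ⟨l + 1 - i, by omega, ?_⟩
    rw [hU0 _ (by omega)]
    have : (⟨l + 1 - (l + 1 - (i : ℕ)), by omega⟩ : Fin (l + 1 + 1)) = i := Fin.ext (by simp; omega)
    rw [this]
    exact hi
end

section
/- For a purely periodic run of the p-adic Jacobi–Perron algorithm with period N and μ = α_0^{(1)} α_1^{(1)} ⋯ α_{N-1}^{(1)} ∈ ℚ_p, the subfield of ℚ_p generated over ℚ by μ equals the subfield generated over ℚ by α_0^{(1)}, …, α_0^{(m)}, i.e. ℚ(μ) = ℚ(α_0^{(1)}, …, α_0^{(m)}); moreover μ is not rational (μ ∉ ℚ). -/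
open Finset Filter

namespace JPAux

open Finset

/-- complete quotients extended by `1` in position `m+1` -/
noncomputable def V {p : ℕ} [Fact p.Prime] (m : ℕ) (α : ℕ → ℕ → ℚ_[p]) (n i : ℕ) : ℚ_[p] :=
  if i = m + 1 then 1 else α n i

section
variable {p m : ℕ} [Fact p.Prime] {α : ℕ → ℕ → ℚ_[p]} {a : ℕ → ℕ → ℚ}

lemma V_last (n : ℕ) : V m α n (m + 1) = 1 := by simp [V]

lemma V_of_mem {n i : ℕ} (hi : i ∈ Icc 1 m) : V m α n i = α n i := by
  have := mem_Icc.1 hi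
  unfold V
  rw [if_neg (by omega)]

lemma ne0 (hrun : JPRun p m α a) (n : ℕ) : α (n + 1) 1 ≠ 0 := by
  obtain ⟨-, h1, h2, -⟩ := hrun n
  rw [h2]
  exact inv_ne_zero (sub_ne_zero.2 h1)

lemma rel (hrun : JPRun p m α a) (n i : ℕ) (hi : i ∈ Icc 1 m) :
    α n i - (a n i : ℚ_[p]) = V m α (n + 1) (i + 1) / α (n + 1) 1 := by
  obtain ⟨-, h1, h2, h3⟩ := hrun n
  have hi' := mem_Icc.1 hi
  have h1' := sub_ne_zero.2 h1
  by_cases him : i = m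
  · subst him
    rw [V_last, h2]
    simp
  · have := h3 (i + 1) (mem_Icc.2 (by omega))
    rw [V_of_mem (mem_Icc.2 (by omega)), this, h2]
    simp only [Nat.add_sub_cancel]
    field_simp

lemma norm_sub (hrun : JPRun p m α a) (n i : ℕ) (hi : i ∈ Icc 1 m) :
    ‖α n i - (a n i : ℚ_[p])‖ < 1 := ((hrun n).1 i hi).2.2

lemma norm_inv (hrun : JPRun p m α a) (hm : 1 ≤ m) (n : ℕ) : ‖(α (n + 1) 1)⁻¹‖ < 1 := by
  have h := norm_sub hrun n m (mem_Icc.2 ⟨hm, le_rfl⟩)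
  rwa [rel hrun n m (mem_Icc.2 ⟨hm, le_rfl⟩), V_last, one_div] at h

/-- the inverse of the running product -/
noncomputable def lam (α : ℕ → ℕ → ℚ_[p]) (n : ℕ) : ℚ_[p] := (∏ j ∈ range n, α (j + 1) 1)⁻¹

lemma lam_succ (hrun : JPRun p m α a) (n : ℕ) : lam α (n + 1) * α (n + 1) 1 = lam α n := by
  unfold lam
  rw [prod_range_succ, mul_inv, mul_assoc, inv_mul_cancel₀ (ne0 hrun n), mul_one]

lemma lam_norm (hrun : JPRun p m α a) (hm : 1 ≤ m) (n : ℕ) : ‖lam α (n + 1)‖ < 1 := by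
  induction n with
  | zero => simpa [lam] using norm_inv hrun hm 0
  | succ n ih =>
    have : lam α (n + 1 + 1) = lam α (n + 1) * (α (n + 1 + 1) 1)⁻¹ := by
      rw [← lam_succ hrun (n + 1), mul_assoc, mul_inv_cancel₀ (ne0 hrun _), mul_one]
    rw [this, norm_mul]
    exact mul_lt_one_of_nonneg_of_lt_one_left (norm_nonneg _) ih (norm_inv hrun hm _).le

lemma y_rec (hrun : JPRun p m α a) (n i : ℕ) (hi : i ∈ Icc 1 m) :
    lam α (n + 1) * V m α (n + 1) (i + 1) = lam α n * V m α n i - (a n i : ℚ_[p]) * lam α n := by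
  have h0 := ne0 hrun n
  have := rel hrun n i hi
  rw [V_of_mem hi, ← lam_succ hrun n]
  rw [eq_div_iff h0] at this
  linear_combination (-lam α (n + 1)) * this

/-- A sequence satisfying the linear recurrence, which is multiplied by something small after `N`
steps and has last coordinate `0`, vanishes. -/
lemma contract (hrun : JPRun p m α a) (hm : 1 ≤ m) (N : ℕ) (hN : 1 ≤ N)
    (hper : ∀ i ∈ Icc 1 m, α N i = α 0 i)
    (u : ℕ → ℕ → ℚ_[p]) (hu1 : ∀ n, u (n + 1) 1 = u n (m + 1))
    (hu : ∀ n, ∀ i ∈ Icc 1 m, u (n + 1) (i + 1) = u n i - (a n i : ℚ_[p]) * u n (m + 1))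
    (c : ℚ_[p]) (hc : ‖c‖ < 1) (huN : ∀ i ∈ Icc 1 (m + 1), u N i = c * u 0 i)
    (h0 : u 0 (m + 1) = 0) : ∀ i ∈ Icc 1 m, u 0 i = 0 := by
  set e : ℕ → ℕ → ℚ_[p] := fun n i => u n i - u n (m + 1) * V m α n i with he
  have elast : ∀ n, e n (m + 1) = 0 := fun n => by simp [he, V_last]
  have erec : ∀ n, ∀ i ∈ Icc 1 m,
      e n i = e (n + 1) (i + 1) - e (n + 1) 1 * (α n i - (a n i : ℚ_[p])) := by
    intro n i hi
    have r := rel hrun n i hi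
    have hz := ne0 hrun n
    have r' := hu n i hi
    have r1 := hu1 n
    have v1 : V m α (n + 1) 1 = α (n + 1) 1 := V_of_mem (mem_Icc.2 ⟨le_rfl, hm⟩)
    simp only [he, v1, V_of_mem hi]
    rw [eq_div_iff hz] at r
    rw [r1, r', ← r]
    ring
  have estep : ∀ (B : ℝ) (n : ℕ), 0 ≤ B → (∀ i ∈ Icc 1 m, ‖e n i‖ ≤ B) →
      ∀ i ∈ Icc 1 m, ‖e 0 i‖ ≤ B := by
    intro B n hB
    induction n with
    | zero => exact fun h => h
    | succ n ih =>
      intro h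
      apply ih
      intro i hi
      have hi' := mem_Icc.1 hi
      rw [erec n i hi]
      have b1 : ‖e (n + 1) (i + 1)‖ ≤ B := by
        by_cases him : i = m
        · rw [him, elast]; simpa using hB
        · exact h _ (mem_Icc.2 (by omega))
      have b2 : ‖e (n + 1) 1 * (α n i - (a n i : ℚ_[p]))‖ ≤ B := by
        rw [norm_mul]
        have q1 := h 1 (mem_Icc.2 ⟨le_rfl, hm⟩)
        have q2 := (norm_sub hrun n i hi).le
        calc _ ≤ B * 1 := by gcongr
          _ = B := mul_one B
      rw [sub_eq_add_neg]
      refine (Padic.nonarchimedean _ _).trans (max_le b1 ?_)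
      rwa [norm_neg]
  have e0 : ∀ i, e 0 i = u 0 i := fun i => by simp [he, h0]
  have eN : ∀ i ∈ Icc 1 m, e N i = c * e 0 i := by
    intro i hi
    have hi' := mem_Icc.1 hi
    rw [e0, ← huN i (mem_Icc.2 (by omega))]
    simp only [he]
    rw [huN (m + 1) (mem_Icc.2 (by omega)), h0]
    simp
  obtain ⟨k, hk, hmax⟩ := exists_max_image (Icc 1 m) (fun i => ‖e 0 i‖) ⟨1, mem_Icc.2 ⟨le_rfl, hm⟩⟩
  have key := estep (‖c‖ * ‖e 0 k‖) N (by positivity) (by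
    intro i hi
    rw [eN i hi, norm_mul]
    have := hmax i hi
    gcongr) k hk
  have hk0 : ‖e 0 k‖ = 0 := by
    have := norm_nonneg (e 0 k)
    by_contra hne
    have hpos : 0 < ‖e 0 k‖ := lt_of_le_of_ne this (Ne.symm hne)
    nlinarith
  intro i hi
  have := hmax i hi
  rw [← e0]
  simp only [hk0] at this
  exact norm_le_zero_iff.1 this

lemma mem_field (hrun : JPRun p m α a) (hm : 1 ≤ m) (N : ℕ) (hN : 1 ≤ N)
    (hper : ∀ i ∈ Icc 1 m, α N i = α 0 i) (K : IntermediateField ℚ ℚ_[p])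
    (hK : lam α N ∈ K) : ∀ i ∈ Icc 1 m, α 0 i ∈ K := by
  obtain ⟨π, hπ⟩ := LinearMap.exists_leftInverse_of_injective (Algebra.linearMap K ℚ_[p])
    (LinearMap.ker_eq_bot.2 (algebraMap K ℚ_[p]).injective)
  have hπ1 : π 1 = 1 := by
    have := LinearMap.congr_fun hπ 1
    simpa using this
  let φ : ℚ_[p] →ₗ[K] ℚ_[p] := LinearMap.id - (Algebra.linearMap K ℚ_[p]).comp π
  have hφ : ∀ x, φ x = x - (π x : ℚ_[p]) := fun x => rfl
  have hφK : ∀ k ∈ K, ∀ x, φ (k * x) = k * φ x := by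
    intro k hk x
    exact φ.map_smul (⟨k, hk⟩ : K) x
  have hφQ : ∀ (q : ℚ) x, φ ((q : ℚ_[p]) * x) = q * φ x := by
    intro q x
    refine hφK _ ?_ x
    exact K.algebraMap_mem q
  have := contract hrun hm N hN hper (fun n i => φ (lam α n * V m α n i))
    (by
      intro n
      rw [V_last, mul_one, V_of_mem (mem_Icc.2 ⟨le_rfl, hm⟩), lam_succ hrun])
    (by
      intro n i hi
      rw [y_rec hrun n i hi, map_sub, V_last, mul_one, hφQ])
    (lam α N) (by obtain ⟨k, rfl⟩ := Nat.exists_eq_add_of_le' hN; exact lam_norm hrun hm k)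
    (by
      intro i hi
      rw [← hφK _ hK]
      have : V m α N i = V m α 0 i := by
        unfold V
        split_ifs with h
        · rfl
        · have := mem_Icc.1 hi
          exact hper i (mem_Icc.2 (by omega))
      rw [this]
      simp [lam])
    (by simp [lam, V_last, hφ, hπ1])
  intro i hi
  have h := this i hi
  simp only [lam, range_zero, prod_empty, inv_one, one_mul, V_of_mem hi, hφ] at h
  rw [sub_eq_zero.1 h]
  exact (π (α 0 i)).2

/-- backwards iteration of rational vectors -/
def w (m : ℕ) (a : ℕ → ℕ → ℚ) (x : ℕ → ℚ) : ℕ → ℕ → ℚ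
  | 0, i => x i
  | n + 1, i => if i = 1 then w m a x n (m + 1) else
      w m a x n (i - 1) - a n (i - 1) * w m a x n (m + 1)

lemma InZ.sub_mul {x y z : ℚ} (hp : p ≠ 0) (hx : InZInvP p x) (hy : InZInvP p y)
    (hz : InZInvP p z) : InZInvP p (x - y * z) := by
  obtain ⟨r, k, rfl⟩ := hx
  obtain ⟨s, l, rfl⟩ := hy
  obtain ⟨t, j, rfl⟩ := hz
  refine ⟨r * p ^ (l + j) - s * t * p ^ k, k + (l + j), ?_⟩
  have : (p : ℚ) ≠ 0 := by exact_mod_cast hp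
  push_cast
  field_simp
  ring

lemma not_rational (hp2 : 2 < p) (hrun : JPRun p m α a) (hm : 1 ≤ m) (q : ℕ → ℚ)
    (hq : ∀ i ∈ Icc 1 m, α 0 i = (q i : ℚ_[p])) : False := by
  have hp0 : p ≠ 0 := by omega
  obtain ⟨D, hD0, hD⟩ : ∃ D : ℕ, D ≠ 0 ∧ ∀ i ∈ Icc 1 m, ∃ z : ℤ, (D : ℚ) * q i = z := by
    refine ⟨∏ i ∈ Icc 1 m, (q i).den, prod_ne_zero_iff.2 fun i _ => (q i).den_nz, ?_⟩
    intro i hi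
    obtain ⟨c, hc⟩ := dvd_prod_of_mem (fun i => (q i).den) hi
    refine ⟨c * (q i).num, ?_⟩
    rw [hc]
    push_cast
    have := Rat.den_mul_eq_num (q i)
    linear_combination (c : ℚ) * this
  set x : ℕ → ℚ := fun i => if i = m + 1 then (D : ℚ) else D * q i with hx
  set W := w m a x with hW
  have W0 : ∀ i, W 0 i = x i := fun i => rfl
  have W1 : ∀ n, W (n + 1) 1 = W n (m + 1) := fun n => by simp [hW, w]
  have Ws : ∀ n i, 1 ≤ i → W (n + 1) (i + 1) = W n i - a n i * W n (m + 1) := by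
    intro n i hi
    have : i ≠ 0 := by omega
    simp [hW, w, this]
  -- integrality away from p
  have hintegral : ∀ n, ∀ i ∈ Icc 1 (m + 1), InZInvP p (W n i) := by
    intro n
    induction n with
    | zero =>
      intro i hi
      rw [W0]
      simp only [hx]
      split_ifs with h
      · exact ⟨D, 0, by simp⟩
      · have := mem_Icc.1 hi
        obtain ⟨z, hz⟩ := hD i (mem_Icc.2 (by omega))
        exact ⟨z, 0, by simp [hz]⟩
    | succ n ih =>
      intro i hi
      have hi' := mem_Icc.1 hi
      by_cases h : i = 1
      · rw [h, W1]; exact ih _ (mem_Icc.2 (by omega))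
      · obtain ⟨k, rfl⟩ := Nat.exists_eq_add_of_le' hi'.1
        rw [Ws n k (by omega)]
        exact InZ.sub_mul hp0 (ih _ (mem_Icc.2 (by omega)))
          ((hrun n).1 k (mem_Icc.2 (by omega))).1 (ih _ (mem_Icc.2 (by omega)))
  -- real size
  obtain ⟨k, hk, hmax⟩ := exists_max_image (Icc 1 (m + 1)) (fun i => |x i|)
    ⟨1, mem_Icc.2 ⟨le_rfl, by omega⟩⟩
  have hp3 : (3 : ℚ) ≤ p := by exact_mod_cast hp2
  have hreal : ∀ n, ∀ i ∈ Icc 1 (m + 1), |W n i| ≤ |x k| * (5 / 6 * p) ^ n := by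
    intro n
    induction n with
    | zero => intro i hi; simpa [W0] using hmax i hi
    | succ n ih =>
      intro i hi
      have hi' := mem_Icc.1 hi
      set B := |x k| * (5 / 6 * (p : ℚ)) ^ n with hB
      have hB0 : 0 ≤ B := by positivity
      have hB' : |x k| * (5 / 6 * (p : ℚ)) ^ (n + 1) = B * (5 / 6 * p) := by rw [hB, pow_succ]; ring
      rw [hB']
      have hl := ih (m + 1) (mem_Icc.2 (by omega))
      by_cases h : i = 1
      · rw [h, W1]; nlinarith
      · obtain ⟨j, rfl⟩ := Nat.exists_eq_add_of_le' hi'.1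
        rw [Ws n j (by omega)]
        have h1 := ih j (mem_Icc.2 (by omega))
        have h2 := ((hrun n).1 j (mem_Icc.2 (by omega))).2.1.le
        have h3 : |a n j * W n (m + 1)| ≤ p / 2 * B := by
          rw [abs_mul]; gcongr
        have h4 := abs_sub (W n j) (a n j * W n (m + 1))
        nlinarith
  -- p-adic size
  have hstep : ∀ n, (∀ i ∈ Icc 1 m, (W n i : ℚ_[p]) = (W n (m + 1) : ℚ_[p]) * α n i) →
      ∀ i ∈ Icc 1 m, ((W (n + 1) (i + 1) : ℚ) : ℚ_[p]) =
        (W n (m + 1) : ℚ_[p]) * (V m α (n + 1) (i + 1) / α (n + 1) 1) := by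
    intro n h i hi
    rw [Ws n i (mem_Icc.1 hi).1, ← rel hrun n i hi]
    push_cast
    rw [h i hi]
    ring
  have hmm : m ∈ Icc 1 m := mem_Icc.2 ⟨hm, le_rfl⟩
  have hpad : ∀ n, ∀ i ∈ Icc 1 m, (W n i : ℚ_[p]) = (W n (m + 1) : ℚ_[p]) * α n i := by
    intro n
    induction n with
    | zero =>
      intro i hi
      have hi' := mem_Icc.1 hi
      have : i ≠ m + 1 := by omega
      rw [hq i hi]
      simp [W0, hx, this]
    | succ n ih =>
      intro i hi
      have hi' := mem_Icc.1 hi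
      have hz := ne0 hrun n
      rw [hstep n ih m hmm, V_last]
      by_cases h : i = 1
      · rw [h, W1]; field_simp
      · obtain ⟨j, rfl⟩ := Nat.exists_eq_add_of_le' hi'.1
        rw [hstep n ih j (mem_Icc.2 (by omega)), V_of_mem hi]
        ring
  have hlast : ∀ n, ((W (n + 1) (m + 1) : ℚ) : ℚ_[p]) =
      (W n (m + 1) : ℚ_[p]) * (α (n + 1) 1)⁻¹ := by
    intro n
    rw [hstep n (hpad n) m hmm, V_last, one_div]
  have hne : ∀ n, W n (m + 1) ≠ 0 := by
    intro n
    induction n with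
    | zero => simpa [W0, hx] using hD0
    | succ n ih =>
      intro h
      have h2 := hlast n
      rw [h] at h2
      have h3 : (W n (m + 1) : ℚ_[p]) ≠ 0 := by exact_mod_cast ih
      exact mul_ne_zero h3 (inv_ne_zero (ne0 hrun n)) (by rw [← h2]; simp)
  have hnorm : ∀ n, ‖(W n (m + 1) : ℚ_[p])‖ ≤ (p : ℝ) ^ (-(n : ℤ)) := by
    intro n
    induction n with
    | zero =>
      have := Padic.norm_int_le_one (p := p) D
      simpa [W0, hx] using this
    | succ n ih =>
      have h1 : ‖(α (n + 1) 1)⁻¹‖ ≤ (p : ℝ) ^ (-1 : ℤ) := by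
        rw [Padic.norm_le_pow_iff_norm_lt_pow_add_one]
        simpa using norm_inv hrun hm n
      rw [hlast, norm_mul, Nat.cast_add, neg_add, zpow_add₀ (by exact_mod_cast hp0)]
      gcongr
      simpa using h1
  have hlow : ∀ n, (p : ℚ) ^ n ≤ |W n (m + 1)| := by
    intro n
    obtain ⟨z, l, hz⟩ := hintegral n (m + 1) (mem_Icc.2 (by omega))
    have hpq : (p : ℚ) ≠ 0 := by exact_mod_cast hp0
    have hz' : (z : ℚ) = W n (m + 1) * p ^ l := by rw [hz]; field_simp
    have hz0 : z ≠ 0 := by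
      rintro rfl
      apply hne n
      rw [hz]; simp
    have hzn : ‖(z : ℚ_[p])‖ ≤ (p : ℝ) ^ (-((n + l : ℕ) : ℤ)) := by
      have : (z : ℚ_[p]) = (W n (m + 1) : ℚ_[p]) * p ^ l := by exact_mod_cast congrArg ((↑) : ℚ → ℚ_[p]) hz'
      rw [this, norm_mul, norm_pow, Padic.norm_p, Nat.cast_add, neg_add, zpow_add₀ (by exact_mod_cast hp0), zpow_neg _ (l : ℤ), zpow_natCast, inv_pow]
      have := hnorm n
      gcongr
    have hdvd := (Padic.norm_int_le_pow_iff_dvd z (n + l)).1 hzn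
    have hle := Int.le_of_dvd (abs_pos.2 hz0) ((dvd_abs _ _).2 hdvd)
    have hle' : (p : ℚ) ^ (n + l) ≤ |(z : ℚ)| := by exact_mod_cast hle
    rw [hz', abs_mul, abs_of_pos (by positivity : (0 : ℚ) < (p : ℚ) ^ l), pow_add] at hle'
    exact le_of_mul_le_mul_right hle' (by positivity)
  obtain ⟨n, hn⟩ := exists_pow_lt_of_lt_one (show (0 : ℚ) < (|x k| + 1)⁻¹ by positivity)
    (show (5 / 6 : ℚ) < 1 by norm_num)
  have h1 := (hlow n).trans (hreal n (m + 1) (mem_Icc.2 (by omega)))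
  rw [mul_pow, ← mul_assoc] at h1
  have h2 : (0 : ℚ) < (p : ℚ) ^ n := by positivity
  have h3 : 1 ≤ |x k| * (5 / 6) ^ n := by
    by_contra hcon
    push Not at hcon
    nlinarith
  rw [lt_inv_comm₀ (by positivity) (by positivity)] at hn
  rw [← div_le_iff₀ (by positivity), one_div] at h3
  linarith

end

end JPAux

/-- For a purely periodic run with period `N` and
`μ = α₀⁽¹⁾α₁⁽¹⁾⋯α_{N-1}⁽¹⁾ ∈ ℚ_p`, one has `ℚ(μ) = ℚ(α₀⁽¹⁾, …, α₀⁽ᵐ⁾)` (as subfields of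
`ℚ_p`), and `μ ∉ ℚ`. -/
theorem jacobiPerron_periodic_field_generated (p m N : ℕ) [hp : Fact p.Prime]
    (hp2 : 2 < p) (hm : 1 ≤ m) (hN : 1 ≤ N)
    (α : ℕ → ℕ → ℚ_[p]) (a : ℕ → ℕ → ℚ) (A : ℤ → ℕ → ℚ)
    (hrun : JPRun p m α a) (hconv : JPConv m a A)
    (hper : ∀ n : ℕ, ∀ i ∈ Finset.Icc 1 m, α (n + N) i = α n i ∧ a (n + N) i = a n i)
    (μ : ℚ_[p]) (hμ : μ = ∏ j ∈ Finset.range N, α j 1) :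
    IntermediateField.adjoin ℚ ({μ} : Set ℚ_[p]) =
      IntermediateField.adjoin ℚ {x : ℚ_[p] | ∃ i ∈ Finset.Icc 1 m, x = α 0 i} ∧
    μ ∉ Set.range ((↑) : ℚ → ℚ_[p]) := by
  have hper0 : ∀ i ∈ Finset.Icc 1 m, α N i = α 0 i := fun i hi => by
    simpa using (hper 0 i hi).1
  have h1m : (1 : ℕ) ∈ Finset.Icc 1 m := Finset.mem_Icc.2 ⟨le_rfl, hm⟩
  have hlam : JPAux.lam α N = μ⁻¹ := by
    have hz : α 0 1 ≠ 0 := by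
      rw [← hper0 1 h1m]
      obtain ⟨k, rfl⟩ := Nat.exists_eq_add_of_le' hN
      exact JPAux.ne0 hrun k
    unfold JPAux.lam
    rw [hμ]
    congr 1
    have e1 := Finset.prod_range_succ (fun j => α j 1) N
    have e2 := Finset.prod_range_succ' (fun j => α j 1) N
    rw [e1, hper0 1 h1m] at e2
    exact (mul_right_cancel₀ hz e2).symm
  have hmem : ∀ K : IntermediateField ℚ ℚ_[p], μ ∈ K → ∀ i ∈ Finset.Icc 1 m, α 0 i ∈ K := by
    intro K hK
    exact JPAux.mem_field hrun hm N hN hper0 K (by rw [hlam]; exact K.inv_mem hK)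
  refine ⟨le_antisymm ?_ ?_, ?_⟩
  · rw [IntermediateField.adjoin_simple_le_iff]
    set K := IntermediateField.adjoin ℚ {x : ℚ_[p] | ∃ i ∈ Finset.Icc 1 m, x = α 0 i} with hK
    have hall : ∀ n, ∀ i ∈ Finset.Icc 1 m, α n i ∈ K := by
      have hQ : ∀ q : ℚ, (q : ℚ_[p]) ∈ K := fun q => K.algebraMap_mem q
      intro n
      induction n with
      | zero => exact fun i hi => IntermediateField.subset_adjoin _ _ ⟨i, hi, rfl⟩
      | succ n ih =>
        intro i hi
        obtain ⟨-, -, h2, h3⟩ := hrun n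
        have hi' := Finset.mem_Icc.1 hi
        have hm' := K.sub_mem (ih m (Finset.mem_Icc.2 ⟨hm, le_rfl⟩)) (hQ (a n m))
        by_cases h : i = 1
        · rw [h, h2]; exact K.inv_mem hm'
        · rw [h3 i (Finset.mem_Icc.2 (by omega))]
          exact K.div_mem (K.sub_mem (ih _ (Finset.mem_Icc.2 (by omega))) (hQ _)) hm'
    rw [hμ]
    exact K.prod_mem fun j _ => hall j 1 h1m
  · rw [IntermediateField.adjoin_le_iff]
    rintro x ⟨i, hi, rfl⟩
    exact hmem _ (IntermediateField.mem_adjoin_simple_self ℚ μ) i hi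
  · rintro ⟨r, hr⟩
    have hb : μ ∈ (⊥ : IntermediateField ℚ ℚ_[p]) := by
      rw [← hr]; exact IntermediateField.algebraMap_mem _ r
    have h := hmem ⊥ hb
    have h' : ∀ i, ∃ q : ℚ, i ∈ Finset.Icc 1 m → α 0 i = (q : ℚ_[p]) := by
      intro i
      by_cases hi : i ∈ Finset.Icc 1 m
      · obtain ⟨q, hq⟩ := IntermediateField.mem_bot.1 (h i hi)
        exact ⟨q, fun _ => hq.symm⟩
      · exact ⟨0, fun h => absurd h hi⟩
    choose q hq using h'
    exact JPAux.not_rational hp2 hrun hm q hq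
end

section
/- For a purely periodic run of the p-adic Jacobi–Perron algorithm with period N = 1, the characteristic polynomial P(X) has no rational root. In particular, when m = 2 the polynomial P(X) (of degree 3) is irreducible over ℚ, and the field ℚ(α_0^{(1)}, α_0^{(2)}) has degree 3 over ℚ. -/
open Finset Filter

/-- A rational root of a monic polynomial over `ℤ[1/p]` with constant term `-1` is `± p^s/p^t`. -/
lemma jp_unit (p m : ℕ) [hp : Fact p.Prime] (b : ℕ → ℚ) (hb : ∀ i < m, InZInvP p (b i)) (q : ℚ)
    (h : q ^ (m + 1) = (∑ i ∈ Finset.range m, b i * q ^ (m - i)) + 1) :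
    ∃ s t : ℕ, |q| = (p : ℚ) ^ s / (p : ℚ) ^ t := by
  have hp0 : (p : ℚ) ≠ 0 := by exact_mod_cast hp.out.ne_zero
  have hK : ∃ (K : ℕ) (z : ℕ → ℤ), ∀ i < m, (p : ℚ) ^ K * b i = z i := by
    have : ∀ i, ∃ (z : ℤ) (k : ℕ), i < m → b i = (z : ℚ) / (p : ℚ) ^ k := by
      intro i
      by_cases hi : i < m
      · obtain ⟨z, k, hz⟩ := hb i hi
        exact ⟨z, k, fun _ => hz⟩
      · exact ⟨0, 0, fun h => absurd h hi⟩
    choose z k hz using this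
    refine ⟨∑ i ∈ Finset.range m, k i, fun i => z i * p ^ ((∑ i ∈ Finset.range m, k i) - k i), ?_⟩
    intro i hi
    have hle : k i ≤ ∑ i ∈ Finset.range m, k i :=
      Finset.single_le_sum (f := k) (fun _ _ => Nat.zero_le _) (Finset.mem_range.2 hi)
    rw [hz i hi]
    push_cast
    rw [pow_sub₀ _ hp0 hle]
    field_simp
  obtain ⟨K, z, hz⟩ := hK
  have hd0 : (q.den : ℚ) ≠ 0 := by exact_mod_cast q.den_ne_zero
  have hq : q = (q.num : ℚ) / q.den := (Rat.num_div_den q).symm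
  have hqd : (q.den : ℚ) * q = q.num := by rw [mul_comm]; exact Rat.mul_den_eq_num q
  -- cleared equation
  have key : ((p : ℤ) ^ K) * q.num ^ (m + 1) =
      (∑ i ∈ Finset.range m, z i * (q.num ^ (m - i) * (q.den : ℤ) ^ (i + 1)))
        + p ^ K * (q.den : ℤ) ^ (m + 1) := by
    have h2 : (p : ℚ) ^ K * (q.num : ℚ) ^ (m + 1) =
      (∑ i ∈ Finset.range m, (z i : ℚ) * ((q.num : ℚ) ^ (m - i) * (q.den : ℚ) ^ (i + 1)))
        + p ^ K * (q.den : ℚ) ^ (m + 1) := by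
      rw [← hqd, mul_pow, h, mul_add, mul_add, Finset.mul_sum, Finset.mul_sum]
      congr 1
      · apply Finset.sum_congr rfl
        intro i hi
        have hi := Finset.mem_range.1 hi
        rw [← hz i hi, mul_pow]
        have : (q.den : ℚ) ^ (m + 1) = (q.den : ℚ) ^ (m - i) * (q.den : ℚ) ^ (i + 1) := by
          rw [← pow_add]; congr 1; omega
        rw [this]; ring
      · ring
    exact_mod_cast h2
  have hcop : IsCoprime q.num (q.den : ℤ) := by
    rw [Int.isCoprime_iff_nat_coprime]; simpa using q.reduced
  have hden : (q.den : ℤ) ∣ (p : ℤ) ^ K := by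
    have h1 : (q.den : ℤ) ∣ (p : ℤ) ^ K * q.num ^ (m + 1) := by
      rw [key]
      apply dvd_add
      · apply Finset.dvd_sum
        intro i _
        exact Dvd.dvd.mul_left (Dvd.dvd.mul_left (dvd_pow_self _ (by omega)) _) _
      · exact Dvd.dvd.mul_left (dvd_pow_self _ (by omega)) _
    exact (hcop.symm.pow_right).dvd_of_dvd_mul_right h1
  have hnum : q.num ∣ (p : ℤ) ^ K := by
    have h1 : q.num ∣ (p : ℤ) ^ K * (q.den : ℤ) ^ (m + 1) := by
      replace key := (sub_eq_iff_eq_add'.2 key).symm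
      rw [key]
      apply dvd_sub
      · exact Dvd.dvd.mul_left (dvd_pow_self _ (by omega)) _
      · apply Finset.dvd_sum
        intro i hi
        have hi := Finset.mem_range.1 hi
        exact Dvd.dvd.mul_left (Dvd.dvd.mul_right (dvd_pow_self _ (by omega)) _) _
    exact (hcop.pow_right).dvd_of_dvd_mul_right h1
  have hden' : q.den ∣ p ^ K := by exact_mod_cast hden
  have hnum' : q.num.natAbs ∣ p ^ K := by
    have := Int.natAbs_dvd_natAbs.2 hnum
    simpa [Int.natAbs_pow] using this
  obtain ⟨t, _, ht⟩ := (Nat.dvd_prime_pow hp.out).1 hden'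
  obtain ⟨s, _, hs⟩ := (Nat.dvd_prime_pow hp.out).1 hnum'
  refine ⟨s, t, ?_⟩
  have e1 : |(q.num : ℚ)| = (p : ℚ) ^ s := by
    have : ((q.num.natAbs : ℕ) : ℚ) = (p : ℚ) ^ s := by rw [hs]; push_cast; rfl
    rw [← this, Nat.cast_natAbs, Int.cast_abs]
  have e2 : (q.den : ℚ) = (p : ℚ) ^ t := by rw [ht]; push_cast; rfl
  rw [hq, abs_div, e1, e2, abs_of_nonneg (by positivity)]

/-- Archimedean bound on the middle sum. -/
lemma jp_sum_le (p m : ℕ) (b : ℕ → ℚ) (hb : ∀ i < m, |b i| < (p : ℚ) / 2) (q : ℚ) :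
    |∑ i ∈ Finset.range m, b i * q ^ (m - i)| ≤
      (p : ℚ) / 2 * (|q| * ∑ i ∈ Finset.range m, |q| ^ i) := by
  refine (Finset.abs_sum_le_sum_abs _ _).trans ?_
  rw [← Finset.sum_range_reflect (fun i => |q| ^ i), Finset.mul_sum, Finset.mul_sum]
  apply Finset.sum_le_sum
  intro i hi
  have hi := Finset.mem_range.1 hi
  have : m - i = (m - 1 - i) + 1 := by omega
  rw [abs_mul, abs_pow, this, pow_succ']
  exact mul_le_mul_of_nonneg_right (hb i hi).le (by positivity)

/-- A root has absolute value one. -/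
lemma jp_abs_one (p m : ℕ) [hp : Fact p.Prime] (hp2 : 2 < p) (b : ℕ → ℚ)
    (hb : ∀ i < m, InZInvP p (b i)) (hb2 : ∀ i < m, |b i| < (p : ℚ) / 2) (q : ℚ)
    (h : q ^ (m + 1) = (∑ i ∈ Finset.range m, b i * q ^ (m - i)) + 1) : |q| = 1 := by
  obtain ⟨s, t, hst⟩ := jp_unit p m b hb q h
  have hp3 : (3 : ℚ) ≤ p := by exact_mod_cast hp2
  have hs := jp_sum_le p m b hb2 q
  have hg := mul_geom_sum (|q|) m
  have hQ0 : 0 < |q| := by rw [hst]; positivity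
  set Q := |q| with hQ
  set G := ∑ i ∈ Finset.range m, Q ^ i with hG
  have hG0 : 0 ≤ G := by positivity
  set S := ∑ i ∈ Finset.range m, b i * q ^ (m - i) with hS
  rcases lt_trichotomy s t with hlt | heq | hgt
  · -- small
    exfalso
    have hQp : p * Q ≤ 1 := by
      rw [hst, ← mul_div_assoc, div_le_one (by positivity), ← pow_succ']
      exact pow_le_pow_right₀ (by linarith) hlt
    have h1 : (1 : ℚ) ≤ Q ^ (m + 1) + |S| := by
      have : (1 : ℚ) = q ^ (m + 1) - S := by linarith
      calc (1 : ℚ) = |q ^ (m + 1) - S| := by rw [← this]; simp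
        _ ≤ |q ^ (m + 1)| + |S| := abs_sub _ _
        _ = _ := by rw [abs_pow]
    have h3 : p / 2 * (Q * G) ≤ G / 2 := by nlinarith
    have hQ3 : Q ≤ 1 / 3 := by nlinarith
    have hQm : 0 < Q ^ m := by positivity
    have hQm1 : Q ^ m ≤ 1 := pow_le_one₀ hQ0.le (by linarith)
    have hG2 : G * (2 / 3) ≤ 1 - Q ^ m := by nlinarith
    have : Q ^ (m + 1) ≤ Q ^ m * (1 / 3) := by
      rw [pow_succ]; exact mul_le_mul_of_nonneg_left hQ3 hQm.le
    linarith
  · rw [hst, heq, div_self (by positivity)]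
  · exfalso
    have hQp : (p : ℚ) ≤ Q := by
      rw [hst, le_div_iff₀ (by positivity), ← pow_succ']
      exact pow_le_pow_right₀ (by linarith) hgt
    have h1 : Q ^ (m + 1) ≤ |S| + 1 := by
      calc Q ^ (m + 1) = |S + 1| := by rw [← h, abs_pow]
        _ ≤ |S| + |1| := abs_add_le _ _
        _ = _ := by simp
    have h4 : (p : ℚ) / 2 * G ≤ 3 / 4 * (Q ^ m - 1) := by
      rw [← hg]
      have : (p : ℚ) / 2 ≤ 3 / 4 * (Q - 1) := by linarith
      nlinarith
    have h5 : p / 2 * (Q * G) ≤ 3 / 4 * (Q ^ (m + 1) - Q) := by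
      rw [pow_succ]; nlinarith
    have : 0 < Q ^ (m + 1) := by positivity
    linarith

lemma jp_no_root (p m : ℕ) [hp : Fact p.Prime] (hp2 : 2 < p) (hm : 1 ≤ m) (b : ℕ → ℚ)
    (hb : ∀ i < m, InZInvP p (b i)) (hb2 : ∀ i < m, |b i| < (p : ℚ) / 2)
    (h0 : 1 < ‖((b 0 : ℚ) : ℚ_[p])‖)
    (hlt : ∀ i < m, 1 ≤ i → ‖((b i : ℚ) : ℚ_[p])‖ < ‖((b 0 : ℚ) : ℚ_[p])‖) (q : ℚ)
    (h : q ^ (m + 1) = (∑ i ∈ Finset.range m, b i * q ^ (m - i)) + 1) : False := by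
  have hq := jp_abs_one p m hp2 b hb hb2 q h
  have hqn : ‖((q : ℚ) : ℚ_[p])‖ = 1 := by
    rcases (abs_eq (by norm_num)).1 hq with h | h <;> simp [h]
  obtain ⟨k, rfl⟩ : ∃ k, m = k + 1 := ⟨m - 1, by omega⟩
  rw [Finset.sum_range_succ'] at h
  have h' : (b 0 : ℚ_[p]) * (q : ℚ_[p]) ^ (k + 1) = (q : ℚ_[p]) ^ (k + 1 + 1) - 1
      - ∑ i ∈ Finset.range k, (b (i + 1) : ℚ_[p]) * (q : ℚ_[p]) ^ (k + 1 - (i + 1)) := by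
    have h2 : b 0 * q ^ (k + 1) = q ^ (k + 1 + 1) - 1
      - ∑ i ∈ Finset.range k, b (i + 1) * q ^ (k + 1 - (i + 1)) := by
      rw [h]; simp
    exact_mod_cast congrArg (fun x : ℚ => (x : ℚ_[p])) h2
  have hsum : ∀ s : Finset ℕ, (∀ i ∈ s, i < k) →
      ‖∑ i ∈ s, (b (i + 1) : ℚ_[p]) * (q : ℚ_[p]) ^ (k + 1 - (i + 1))‖ < ‖((b 0 : ℚ) : ℚ_[p])‖ := by
    intro s
    induction s using Finset.induction_on with
    | empty => intro _; simp only [Finset.sum_empty, norm_zero]; linarith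
    | insert i s hi ih =>
      intro hs
      rw [Finset.sum_insert hi]
      refine (Padic.nonarchimedean _ _).trans_lt (max_lt ?_ (ih fun j hj => hs j (Finset.mem_insert_of_mem hj)))
      rw [norm_mul, norm_pow, hqn, one_pow, mul_one]
      exact hlt _ (by have := hs i (Finset.mem_insert_self _ _); omega) (by omega)
  have hsum := hsum (Finset.range k) (fun i hi => Finset.mem_range.1 hi)
  have hn := congrArg norm h'
  rw [norm_mul, norm_pow, hqn, one_pow, mul_one] at hn
  have : ‖(q : ℚ_[p]) ^ (k + 1 + 1) - 1
      - ∑ i ∈ Finset.range k, (b (i + 1) : ℚ_[p]) * (q : ℚ_[p]) ^ (k + 1 - (i + 1))‖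
      < ‖((b 0 : ℚ) : ℚ_[p])‖ := by
    rw [sub_eq_add_neg]
    refine (Padic.nonarchimedean _ _).trans_lt (max_lt ?_ (by rwa [norm_neg]))
    rw [sub_eq_add_neg]
    refine (Padic.nonarchimedean _ _).trans_lt (max_lt ?_ ?_)
    · rw [norm_pow, hqn, one_pow]; exact h0
    · rw [norm_neg, norm_one]; exact h0
  linarith

/-- Root of the characteristic polynomial of the period-one matrix. -/
lemma jp_root_eq (m : ℕ) (b : ℕ → ℚ) (M : Matrix (Fin (m + 1)) (Fin (m + 1)) ℚ)
    (h0 : ∀ i : Fin m, M i.castSucc 0 = b i) (hl : M (Fin.last m) 0 = 1)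
    (hs : ∀ (i : Fin (m + 1)) (j : Fin m), M i j.succ = if i = j.castSucc then 1 else 0)
    (q : ℚ) (h : M.charpoly.IsRoot q) :
    q ^ (m + 1) = (∑ i ∈ Finset.range m, b i * q ^ (m - i)) + 1 := by
  rw [Polynomial.IsRoot, Matrix.eval_charpoly] at h
  obtain ⟨v, hv, hv0⟩ := Matrix.exists_vecMul_eq_zero_iff.2 h
  have hvM : Matrix.vecMul v M = q • v := by
    rw [Matrix.vecMul_sub, sub_eq_zero] at hv0
    rw [← hv0]
    ext j
    simp [Matrix.scalar_apply, Matrix.vecMul_diagonal, mul_comm]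
  have hstep : ∀ j : Fin m, v j.castSucc = q * v j.succ := by
    intro j
    have := congrFun hvM j.succ
    simpa [Matrix.vecMul, dotProduct, hs] using this
  have hall : ∀ k (hk : k ≤ m), v ⟨m - k, by omega⟩ = q ^ k * v (Fin.last m) := by
    intro k
    induction k with
    | zero => intro _; simp [Fin.last]
    | succ k ih =>
      intro hk
      have := hstep ⟨m - (k + 1), by omega⟩
      have e : (Fin.succ ⟨m - (k + 1), by omega⟩ : Fin (m + 1)) = ⟨m - k, by omega⟩ := by
        ext; simp; omega
      rw [e, ih (by omega)] at this
      rw [pow_succ', mul_assoc, ← this]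
      rfl
  have hall' : ∀ i : Fin (m + 1), v i = q ^ (m - (i : ℕ)) * v (Fin.last m) := by
    intro i
    rw [← hall (m - i) (by omega)]
    congr 1; ext; simp; omega
  have hlast : v (Fin.last m) ≠ 0 := by
    intro hz
    apply hv
    ext i
    rw [hall' i, hz]; simp
  have h1 := congrFun hvM 0
  simp only [Matrix.vecMul, dotProduct, Pi.smul_apply, smul_eq_mul] at h1
  rw [Fin.sum_univ_castSucc] at h1
  simp only [h0, hl, mul_one] at h1
  rw [hall' 0] at h1
  apply mul_right_cancel₀ hlast
  rw [add_mul, one_mul, Finset.sum_mul, ← Fin.sum_univ_eq_sum_range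
    (fun i => b i * q ^ (m - i) * v (Fin.last m)), pow_succ', mul_assoc]
  simp only [Fin.val_zero, Nat.sub_zero] at h1
  rw [← h1]
  congr 1
  apply Finset.sum_congr rfl
  intro i _
  rw [hall' i.castSucc]
  simp only [Fin.val_castSucc]
  ring

/-- For a purely periodic run of period `N = 1`, the characteristic polynomial
`P(X)` has no rational root; in particular, when `m = 2`, `P` is irreducible over `ℚ` and the
field `ℚ(α₀⁽¹⁾, α₀⁽²⁾)` has degree `3` over `ℚ`. -/
theorem jacobiPerron_period_one_no_rational_root (p m : ℕ) [hp : Fact p.Prime]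
    (hp2 : 2 < p) (hm : 1 ≤ m)
    (α : ℕ → ℕ → ℚ_[p]) (a : ℕ → ℕ → ℚ) (A : ℤ → ℕ → ℚ)
    (hrun : JPRun p m α a) (hconv : JPConv m a A)
    (hper : ∀ n : ℕ, ∀ i ∈ Finset.Icc 1 m, α (n + 1) i = α n i ∧ a (n + 1) i = a n i)
    (M : Matrix (Fin (m + 1)) (Fin (m + 1)) ℚ)
    (hM : ∀ i j : Fin (m + 1), M i j = A ((1 : ℤ) - ((j : ℕ) + 1)) ((i : ℕ) + 1)) :
    (∀ q : ℚ, ¬ (Matrix.charpoly M).IsRoot q) ∧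
    (m = 2 → Irreducible (Matrix.charpoly M) ∧
      Module.finrank ℚ
        (IntermediateField.adjoin ℚ ({α 0 1, α 0 2} : Set ℚ_[p])) = 3) := by
  obtain ⟨hA1, hA2⟩ := hconv
  -- matrix entries
  have e0 : ∀ i : Fin m, M i.castSucc 0 = a 0 (i + 1) := by
    intro i
    have hi := i.2
    rw [hM]
    have := hA2 0 (i + 1) (Finset.mem_Icc.2 ⟨by omega, by omega⟩)
    simp only [Fin.val_castSucc, Fin.val_zero]
    have hz : (1 : ℤ) - (((0 : ℕ) : ℤ) + 1) = ((0 : ℕ) : ℤ) := by norm_num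
    rw [hz, this]
    have hlast : A (((0 : ℕ) : ℤ) - m - 1) (i + 1) = 0 := by
      have := hA1 (i + 1) (Finset.mem_Icc.2 ⟨by omega, by omega⟩) (m + 1)
        (Finset.mem_Icc.2 ⟨by omega, by omega⟩)
      rw [if_neg (by omega)] at this
      rw [← this]; congr 1; push_cast; ring
    rw [hlast, add_zero, Finset.sum_eq_single ((i : ℕ) + 1)]
    · have := hA1 (i + 1) (Finset.mem_Icc.2 ⟨by omega, by omega⟩) (i + 1)
        (Finset.mem_Icc.2 ⟨by omega, by omega⟩)
      rw [if_pos rfl] at this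
      rw [Nat.cast_zero, zero_sub, this, mul_one]
    · intro j hj hne
      have hj := Finset.mem_Icc.1 hj
      have := hA1 (i + 1) (Finset.mem_Icc.2 ⟨by omega, by omega⟩) j
        (Finset.mem_Icc.2 ⟨by omega, by omega⟩)
      rw [if_neg (by omega)] at this
      rw [Nat.cast_zero, zero_sub, this, mul_zero]
    · intro h
      exact absurd (Finset.mem_Icc.2 ⟨by omega, by omega⟩) h
  have el : M (Fin.last m) 0 = 1 := by
    rw [hM]
    have := hA2 0 (m + 1) (Finset.mem_Icc.2 ⟨by omega, by omega⟩)
    simp only [Fin.val_last, Fin.val_zero]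
    have hz : (1 : ℤ) - (((0 : ℕ) : ℤ) + 1) = ((0 : ℕ) : ℤ) := by norm_num
    rw [hz, this]
    have hlast : A (((0 : ℕ) : ℤ) - m - 1) (m + 1) = 1 := by
      have := hA1 (m + 1) (Finset.mem_Icc.2 ⟨by omega, by omega⟩) (m + 1)
        (Finset.mem_Icc.2 ⟨by omega, by omega⟩)
      rw [if_pos rfl] at this
      rw [← this]; congr 1; push_cast; ring
    rw [hlast, Finset.sum_eq_zero, zero_add]
    intro j hj
    have hj := Finset.mem_Icc.1 hj
    have := hA1 (m + 1) (Finset.mem_Icc.2 ⟨by omega, by omega⟩) j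
      (Finset.mem_Icc.2 ⟨by omega, by omega⟩)
    rw [if_neg (by omega)] at this
    rw [Nat.cast_zero, zero_sub, this, mul_zero]
  have es : ∀ (i : Fin (m + 1)) (j : Fin m), M i j.succ = if i = j.castSucc then 1 else 0 := by
    intro i j
    have hi := i.2
    have hj := j.2
    rw [hM]
    have := hA1 (i + 1) (Finset.mem_Icc.2 ⟨by omega, by omega⟩) (j + 1)
      (Finset.mem_Icc.2 ⟨by omega, by omega⟩)
    have hz : (1 : ℤ) - (((j.succ : Fin (m + 1)) : ℕ) + 1) = -((j + 1 : ℕ) : ℤ) := by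
      simp
    rw [hz, this]
    simp [Fin.ext_iff]
  -- p-adic facts
  obtain ⟨hS, hne, hα1, hαi⟩ := hrun 0
  have hone : (1 : ℕ) ∈ Finset.Icc 1 m := Finset.mem_Icc.2 ⟨le_rfl, hm⟩
  rw [(hper 0 1 hone).1] at hα1
  have hmm : m ∈ Finset.Icc 1 m := Finset.mem_Icc.2 ⟨hm, le_rfl⟩
  have hα1n : 1 < ‖α 0 1‖ := by
    rw [hα1, norm_inv]
    exact (one_lt_inv₀ (norm_pos_iff.2 (sub_ne_zero.2 hne))).2 (hS m hmm).2.2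
  have ha1 : ‖((a 0 1 : ℚ) : ℚ_[p])‖ = ‖α 0 1‖ := by
    have h1 := (hS 1 hone).2.2
    have h2 : ((a 0 1 : ℚ) : ℚ_[p]) = α 0 1 + -(α 0 1 - ((a 0 1 : ℚ) : ℚ_[p])) := by ring
    rw [h2, Padic.add_eq_max_of_ne, norm_neg, max_eq_left (by linarith)]
    rw [norm_neg]; exact ne_of_gt (by linarith)
  have hαi' : ∀ i ∈ Finset.Icc 2 m,
      α 0 i = (α 0 (i - 1) - ((a 0 (i - 1) : ℚ) : ℚ_[p])) * α 0 1 := by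
    intro i hi
    have hi' := Finset.mem_Icc.1 hi
    have h1 := hαi i hi
    rw [(hper 0 i (Finset.mem_Icc.2 ⟨by omega, by omega⟩)).1, div_eq_mul_inv, ← hα1] at h1
    exact h1
  have hai : ∀ i ∈ Finset.Icc 2 m, ‖((a 0 i : ℚ) : ℚ_[p])‖ < ‖α 0 1‖ := by
    intro i hi
    have hi' := Finset.mem_Icc.1 hi
    have h1 := (hS i (Finset.mem_Icc.2 ⟨by omega, by omega⟩)).2.2
    have h3 := (hS (i - 1) (Finset.mem_Icc.2 ⟨by omega, by omega⟩)).2.2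
    have h2 : ((a 0 i : ℚ) : ℚ_[p]) = α 0 i + -(α 0 i - ((a 0 i : ℚ) : ℚ_[p])) := by ring
    rw [h2]
    refine (Padic.nonarchimedean _ _).trans_lt (max_lt ?_ ?_)
    · rw [hαi' i hi, norm_mul]
      exact mul_lt_of_lt_one_left (by linarith) h3
    · rw [norm_neg]; linarith
  have noroot : ∀ q : ℚ, ¬ (Matrix.charpoly M).IsRoot q := by
    intro q hq
    have heq := jp_root_eq m (fun i => a 0 (i + 1)) M e0 el es q hq
    refine jp_no_root p m hp2 hm (fun i => a 0 (i + 1)) ?_ ?_ ?_ ?_ q heq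
    · intro i hi; exact (hS (i + 1) (Finset.mem_Icc.2 ⟨by omega, by omega⟩)).1
    · intro i hi; exact (hS (i + 1) (Finset.mem_Icc.2 ⟨by omega, by omega⟩)).2.1
    · simpa [ha1] using hα1n
    · intro i hi hi1
      have := hai (i + 1) (Finset.mem_Icc.2 ⟨by omega, by omega⟩)
      simpa [ha1] using this
  refine ⟨noroot, ?_⟩
  intro hm2
  subst hm2
  have hdeg : M.charpoly.natDegree = 3 := by simp [Matrix.charpoly_natDegree_eq_dim]
  have hmon : M.charpoly.Monic := M.charpoly_monic
  have hirr : Irreducible M.charpoly := by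
    rw [Polynomial.irreducible_iff_roots_eq_zero_of_degree_le_three (by omega) (by omega)]
    rw [Multiset.eq_zero_iff_forall_notMem]
    intro q hq
    exact noroot q (Polynomial.isRoot_of_mem_roots hq)
  refine ⟨hirr, ?_⟩
  have hμ0 : α 0 1 ≠ 0 := by
    intro h; rw [h, norm_zero] at hα1n; linarith
  have h2 := hαi' 2 (by simp)
  norm_num at h2
  have hα2 : α 0 2 = (a 0 2 : ℚ_[p]) + (α 0 1)⁻¹ := by
    rw [hα1, inv_inv]; ring
  have hroot : α 0 1 ^ 3 = (a 0 1 : ℚ_[p]) * α 0 1 ^ 2 + (a 0 2 : ℚ_[p]) * α 0 1 + 1 := by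
    have : (α 0 1 - (a 0 1 : ℚ_[p])) * α 0 1 * α 0 1 = (a 0 2 : ℚ_[p]) * α 0 1 + 1 := by
      rw [← h2, hα2]; field_simp
    linear_combination this
  have haev : Polynomial.aeval (α 0 1) M.charpoly = 0 := by
    have m00 : M 0 0 = a 0 1 := e0 0
    have m10 : M 1 0 = a 0 2 := e0 1
    have m20 : M 2 0 = 1 := el
    have m01 : M 0 1 = 1 := es 0 0
    have m11 : M 1 1 = 0 := es 1 0
    have m21 : M 2 1 = 0 := es 2 0
    have m02 : M 0 2 = 0 := es 0 1
    have m12 : M 1 2 = 1 := es 1 1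
    have m22 : M 2 2 = 0 := es 2 1
    rw [Matrix.charpoly, Matrix.det_fin_three]
    simp [m00, m10, m20, m01, m11, m21, m02, m12, m22]
    linear_combination hroot
  have hmin : minpoly ℚ (α 0 1) = M.charpoly :=
    (minpoly.eq_of_irreducible_of_monic hirr haev hmon).symm
  have hint : IsIntegral ℚ (α 0 1) := ⟨M.charpoly, hmon, haev⟩
  have hadj : IntermediateField.adjoin ℚ ({α 0 1, α 0 2} : Set ℚ_[p]) =
      IntermediateField.adjoin ℚ ({α 0 1} : Set ℚ_[p]) := by
    apply le_antisymm
    · rw [IntermediateField.adjoin_le_iff]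
      have hmem : α 0 1 ∈ IntermediateField.adjoin ℚ ({α 0 1} : Set ℚ_[p]) :=
        IntermediateField.mem_adjoin_simple_self ℚ _
      intro x hx
      rcases hx with rfl | hx
      · exact hmem
      · rw [Set.mem_singleton_iff.1 hx, hα2]
        exact add_mem (IntermediateField.algebraMap_mem _ (a 0 2)) (inv_mem hmem)
    · apply IntermediateField.adjoin.mono
      intro x hx
      exact Or.inl hx
  rw [hadj, IntermediateField.adjoin.finrank hint, hmin, hdeg]
end

section
/- For an infinite run of the p-adic Jacobi–Perron algorithm with a ℚ-linear dependence relation as above, the sequence (S_n) satisfies: S_n ∈ ℤ for every n ≥ −m, and for every n ≥ 0 the greatest common divisor of S_n, S_{n-1}, …, S_{n-m} is a power of p (i.e. equals p^k for some integer k ≥ 0). -/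
open Finset Filter

lemma jp_sum_Icc {M : Type*} [AddCommMonoid M] (m : ℕ) (f : ℕ → M) :
    ∑ i ∈ Finset.Icc 1 m, f i = ∑ j ∈ Finset.range m, f (j + 1) := by
  induction m with
  | zero => simp
  | succ k ih => rw [Finset.sum_Icc_succ_top (by omega), ih, Finset.sum_range_succ]

lemma jp_common (p : ℕ) (hp : p ≠ 0) (f : ℕ → ℚ) (m : ℕ) (h : ∀ j < m, InZInvP p (f j)) :
    ∃ k : ℕ, ∀ j < m, ∃ z : ℤ, (p : ℚ) ^ k * f j = z := by
  have hp' : (p : ℚ) ≠ 0 := by exact_mod_cast hp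
  induction m with
  | zero => exact ⟨0, by simp⟩
  | succ m ih =>
    obtain ⟨k, hk⟩ := ih (fun j hj => h j (by omega))
    obtain ⟨z, l, hz⟩ := h m (by omega)
    refine ⟨k + l, fun j hj => ?_⟩
    rcases Nat.lt_succ_iff_lt_or_eq.mp hj with h1 | rfl
    · obtain ⟨y, hy⟩ := hk j h1
      refine ⟨y * (p : ℤ) ^ l, ?_⟩
      push_cast
      rw [← hy]; ring
    · refine ⟨z * (p : ℤ) ^ k, ?_⟩
      rw [hz]; push_cast; field_simp; ring

lemma jp_integral (p : ℕ) [hp : Fact p.Prime] (q : ℚ) (k : ℕ) (z : ℤ)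
    (h : (p : ℚ) ^ k * q = z) (hn : ‖(q : ℚ_[p])‖ ≤ 1) : ∃ w : ℤ, q = w := by
  have hp' : (p : ℚ) ≠ 0 := by exact_mod_cast hp.out.ne_zero
  have h2 : ((z : ℤ) : ℚ_[p]) = (p : ℚ_[p]) ^ k * (q : ℚ_[p]) := by
    have := congrArg (fun t : ℚ => (t : ℚ_[p])) h
    push_cast at this
    exact this.symm
  have h3 : ‖((z : ℤ) : ℚ_[p])‖ ≤ (p : ℝ) ^ (-(k : ℤ)) := by
    rw [h2, norm_mul, Padic.norm_p_pow]
    exact mul_le_of_le_one_right (by positivity) hn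
  rw [Padic.norm_int_le_pow_iff_dvd] at h3
  obtain ⟨w, hw⟩ := h3
  refine ⟨w, ?_⟩
  rw [hw] at h
  push_cast at h
  exact mul_left_cancel₀ (pow_ne_zero k hp') h

lemma jp_norm_sum_le (p : ℕ) [Fact p.Prime] (f : ℕ → ℚ_[p]) (m : ℕ) (h : ∀ j < m, ‖f j‖ ≤ 1) :
    ‖∑ j ∈ Finset.range m, f j‖ ≤ 1 := by
  induction m with
  | zero => simp
  | succ m ih =>
    rw [Finset.sum_range_succ]
    exact (Padic.nonarchimedean _ _).trans
      (max_le (ih fun j hj => h j (by omega)) (h m (by omega)))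

/-- For an infinite run with a `ℚ`-linear dependence relation with coprime
integer coefficients, `Sₙ ∈ ℤ` for every `n ≥ -m`, and for every `n ≥ 0` the gcd of
`Sₙ, S_{n-1}, …, S_{n-m}` is a power of `p`. -/
theorem jacobiPerron_S_integral_gcd (p m : ℕ) [hp : Fact p.Prime]
    (hp2 : 2 < p) (hm : 1 ≤ m)
    (α : ℕ → ℕ → ℚ_[p]) (a : ℕ → ℕ → ℚ) (A : ℤ → ℕ → ℚ)
    (hrun : JPRun p m α a) (hconv : JPConv m a A)
    (x : ℕ → ℤ) (hgcd : Finset.gcd (Finset.Icc 1 (m + 1)) x = 1)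
    (hdep : (∑ i ∈ Finset.Icc 1 m, ((x i : ℚ) : ℚ_[p]) * α 0 i) + ((x (m + 1) : ℤ) : ℚ_[p]) = 0)
    (S : ℤ → ℚ)
    (hS : ∀ n : ℤ, S n = ∑ i ∈ Finset.Icc 1 (m + 1), (x i : ℚ) * A (n - 1) i) :
    ∃ T : ℤ → ℤ, (∀ n : ℤ, -(m : ℤ) ≤ n → S n = (T n : ℚ)) ∧
      ∀ n : ℤ, 0 ≤ n → ∃ k : ℕ,
        Finset.gcd (Finset.range (m + 1)) (fun j => T (n - (j : ℤ))) = (p : ℤ) ^ k := by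
  have hp0 : (p : ℚ) ≠ 0 := by exact_mod_cast hp.out.ne_zero
  obtain ⟨M, rfl⟩ : ∃ M, m = M + 1 := ⟨m - 1, by omega⟩
  -- initial values
  have hinit : ∀ j < M + 2, S (-(j : ℤ)) = x (j + 1) := by
    intro j hj
    rw [hS]
    have e : (-(j : ℤ) - 1) = -((j + 1 : ℕ) : ℤ) := by push_cast; ring
    rw [e, Finset.sum_eq_single (j + 1)]
    · rw [hconv.1 _ (by simp; omega) _ (by simp; omega)]; simp
    · intro i hi hne
      rw [hconv.1 _ hi _ (by simp; omega)]; simp [hne]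
    · intro hh; exact absurd (by simp; omega) hh
  -- recurrence
  have hrec : ∀ n : ℕ, S ((n : ℤ) + 1) =
      (∑ j ∈ Finset.range (M + 1), a n (j + 1) * S ((n : ℤ) - j)) + S ((n : ℤ) - (M + 1 : ℕ)) := by
    intro n
    simp only [hS]
    have : ∀ i ∈ Finset.Icc 1 (M + 1 + 1), (x i : ℚ) * A ((n : ℤ) + 1 - 1) i =
        (∑ j ∈ Finset.range (M + 1), a n (j + 1) * ((x i : ℚ) * A ((n : ℤ) - j - 1) i))
          + (x i : ℚ) * A ((n : ℤ) - (M + 1 : ℕ) - 1) i := by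
      intro i hi
      rw [add_sub_cancel_right, hconv.2 n i hi, jp_sum_Icc, mul_add, Finset.mul_sum]
      congr 1
      refine Finset.sum_congr rfl fun j _ => ?_
      have e : (n : ℤ) - ((j + 1 : ℕ) : ℤ) = n - j - 1 := by push_cast; ring
      rw [e]; ring
    rw [Finset.sum_congr rfl this, Finset.sum_add_distrib, Finset.sum_comm]
    simp only [Finset.mul_sum]
  have hsv : ∀ n, ∀ j < M + 1, IsSValue p (α n (j + 1)) (a n (j + 1)) := fun n j hj =>
    (hrun n).1 _ (by simp; omega)
  -- dependence relation propagates
  have hrel : ∀ n : ℕ, (∑ j ∈ Finset.range (M + 1), (S ((n : ℤ) - j) : ℚ_[p]) * α n (j + 1))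
      + (S ((n : ℤ) - (M + 1 : ℕ)) : ℚ_[p]) = 0 ∧
      (S ((n : ℤ) + 1) : ℚ_[p]) = - ∑ j ∈ Finset.range (M + 1),
        (α n (j + 1) - (a n (j + 1) : ℚ_[p])) * (S ((n : ℤ) - j) : ℚ_[p]) := by
    have step : ∀ n : ℕ, (∑ j ∈ Finset.range (M + 1), (S ((n : ℤ) - j) : ℚ_[p]) * α n (j + 1))
      + (S ((n : ℤ) - (M + 1 : ℕ)) : ℚ_[p]) = 0 →
      (S ((n : ℤ) + 1) : ℚ_[p]) = - ∑ j ∈ Finset.range (M + 1),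
        (α n (j + 1) - (a n (j + 1) : ℚ_[p])) * (S ((n : ℤ) - j) : ℚ_[p]) := by
      intro n h
      rw [hrec]
      simp only [Rat.cast_add, Rat.cast_sum, Rat.cast_mul, sub_mul, Finset.sum_sub_distrib]
      have e : ∑ j ∈ Finset.range (M + 1), α n (j + 1) * (S ((n : ℤ) - j) : ℚ_[p]) =
        ∑ j ∈ Finset.range (M + 1), (S ((n : ℤ) - j) : ℚ_[p]) * α n (j + 1) :=
          Finset.sum_congr rfl fun j _ => mul_comm _ _
      rw [e]
      linear_combination h
    intro n
    induction n with
    | zero =>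
      have h0 : (∑ j ∈ Finset.range (M + 1), (S (((0 : ℕ) : ℤ) - j) : ℚ_[p]) * α 0 (j + 1))
        + (S (((0 : ℕ) : ℤ) - (M + 1 : ℕ)) : ℚ_[p]) = 0 := by
        rw [← hdep, jp_sum_Icc]
        congr 1
        · refine Finset.sum_congr rfl fun j hj => ?_
          rw [Finset.mem_range] at hj
          rw [Nat.cast_zero, zero_sub, hinit j (by omega)]
        · rw [Nat.cast_zero, zero_sub, hinit (M + 1) (by omega)]
          simp
      exact ⟨h0, step 0 h0⟩
    | succ n ih =>
      have h1 : (∑ j ∈ Finset.range (M + 1), (S (((n + 1 : ℕ) : ℤ) - j) : ℚ_[p]) * α (n + 1) (j + 1))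
        + (S (((n + 1 : ℕ) : ℤ) - (M + 1 : ℕ)) : ℚ_[p]) = 0 := by
        obtain ⟨-, hne, hα1, hα⟩ := hrun n
        have hd : α n (M + 1) - (a n (M + 1) : ℚ_[p]) ≠ 0 := sub_ne_zero.mpr hne
        rw [Finset.sum_range_succ']
        have e1 : ∀ j ∈ Finset.range M,
            (S (((n + 1 : ℕ) : ℤ) - ((j + 1 : ℕ) : ℤ)) : ℚ_[p]) * α (n + 1) (j + 1 + 1) =
            ((α n (j + 1) - (a n (j + 1) : ℚ_[p])) * (S ((n : ℤ) - j) : ℚ_[p])) *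
              (α n (M + 1) - (a n (M + 1) : ℚ_[p]))⁻¹ := by
          intro j hj
          rw [Finset.mem_range] at hj
          rw [hα (j + 1 + 1) (by simp; omega)]
          have e : ((n + 1 : ℕ) : ℤ) - ((j + 1 : ℕ) : ℤ) = n - j := by push_cast; ring
          rw [e, div_eq_mul_inv, Nat.add_sub_cancel]; ring
        rw [Finset.sum_congr rfl e1, ← Finset.sum_mul]
        have e2 : ((n + 1 : ℕ) : ℤ) - ((M + 1 : ℕ) : ℤ) = n - M := by push_cast; ring
        have e3 : ((n + 1 : ℕ) : ℤ) - ((0 : ℕ) : ℤ) = n + 1 := by push_cast; ring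
        have h2 := ih.2
        rw [Finset.sum_range_succ] at h2
        rw [e2, e3, zero_add, hα1, h2]
        field_simp
        ring
      exact ⟨h1, step _ h1⟩
  have hcommon : ∀ n, ∃ k : ℕ, ∀ j < M + 1, ∃ z : ℤ, (p : ℚ) ^ k * a n (j + 1) = z := fun n =>
    jp_common p hp.out.ne_zero (fun j => a n (j + 1)) (M + 1) fun j hj => (hsv n j hj).1
  -- integrality
  have hintegral : ∀ n : ℕ, ∀ j < M + 2, ∃ z : ℤ, S ((n : ℤ) - j) = z := by
    intro n
    induction n with
    | zero =>
      intro j hj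
      exact ⟨x (j + 1), by rw [Nat.cast_zero, zero_sub, hinit j hj]⟩
    | succ n ih =>
      intro j hj
      rcases j with _ | j
      · have e3 : ((n + 1 : ℕ) : ℤ) - ((0 : ℕ) : ℤ) = n + 1 := by push_cast; ring
        rw [e3]
        obtain ⟨k, hk⟩ := hcommon n
        have hz : ∃ z : ℤ, (p : ℚ) ^ k * S ((n : ℤ) + 1) = z := by
          choose! c hc using hk
          choose! t ht using ih
          refine ⟨(∑ j ∈ Finset.range (M + 1), c j * t j) + (p : ℤ) ^ k * t (M + 1), ?_⟩
          rw [hrec, ht (M + 1) (by omega), mul_add, Finset.mul_sum]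
          push_cast
          congr 1
          refine Finset.sum_congr rfl fun j hj => ?_
          rw [Finset.mem_range] at hj
          rw [ht j (by omega), ← hc j hj]; ring
        obtain ⟨z, hz⟩ := hz
        refine jp_integral p _ k z hz ?_
        rw [(hrel n).2, norm_neg]
        refine jp_norm_sum_le p _ _ fun j hj => ?_
        obtain ⟨t, ht⟩ := ih j (by omega)
        rw [norm_mul, ht, Rat.cast_intCast]
        exact mul_le_one₀ (hsv n j hj).2.2.le (norm_nonneg _) (Padic.norm_int_le_one t)
      · have e : ((n + 1 : ℕ) : ℤ) - ((j + 1 : ℕ) : ℤ) = n - j := by push_cast; ring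
        rw [e]; exact ih j (by omega)
  -- divisibility
  have hdiv : ∀ n : ℕ, ∃ K : ℕ, ∀ d : ℤ, ∀ b : ℤ,
      (∀ j < M + 2, ∃ e : ℤ, (b : ℚ) * S ((n : ℤ) - j) = d * e) → d ∣ b * (p : ℤ) ^ K := by
    intro n
    induction n with
    | zero =>
      refine ⟨0, fun d b h => ?_⟩
      have h1 : d ∣ Finset.gcd (Finset.Icc 1 (M + 1 + 1)) (fun i => b * x i) := by
        refine Finset.dvd_gcd fun i hi => ?_
        rw [Finset.mem_Icc] at hi
        obtain ⟨e, he⟩ := h (i - 1) (by omega)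
        rw [Nat.cast_zero, zero_sub, hinit _ (by omega), Nat.sub_add_cancel hi.1] at he
        exact ⟨e, by exact_mod_cast he⟩
      rw [Finset.gcd_mul_left, hgcd, mul_one] at h1
      rw [pow_zero, mul_one]
      exact (dvd_normalize_iff).mp h1
    | succ n ih =>
      obtain ⟨K, hK⟩ := ih
      obtain ⟨k, hk⟩ := hcommon n
      refine ⟨k + K, fun d b h => ?_⟩
      have h' : ∀ j < M + 1, ∃ e : ℤ, (b : ℚ) * S ((n : ℤ) - j) = d * e := by
        intro j hj
        obtain ⟨e, he⟩ := h (j + 1) (by omega)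
        have e1 : ((n + 1 : ℕ) : ℤ) - ((j + 1 : ℕ) : ℤ) = n - j := by push_cast; ring
        rw [e1] at he
        exact ⟨e, he⟩
      have := hK d (b * (p : ℤ) ^ k) ?_
      · rw [pow_add, ← mul_assoc]; exact this
      intro j hj
      by_cases hj' : j < M + 1
      · obtain ⟨e, he⟩ := h' j hj'
        refine ⟨(p : ℤ) ^ k * e, ?_⟩
        push_cast
        linear_combination (p : ℚ) ^ k * he
      · obtain rfl : j = M + 1 := by omega
        obtain ⟨e, he⟩ := h 0 (by omega)
        have e3 : ((n + 1 : ℕ) : ℤ) - ((0 : ℕ) : ℤ) = n + 1 := by push_cast; ring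
        rw [e3, hrec] at he
        choose! c hc using hk
        choose! t ht using h'
        refine ⟨(p : ℤ) ^ k * e - ∑ j ∈ Finset.range (M + 1), c j * t j, ?_⟩
        have hs : (p : ℚ) ^ k * (b * ∑ j ∈ Finset.range (M + 1), a n (j + 1) * S ((n : ℤ) - j)) =
            d * ∑ j ∈ Finset.range (M + 1), (c j : ℚ) * t j := by
          simp only [Finset.mul_sum]
          refine Finset.sum_congr rfl fun j hj => ?_
          rw [Finset.mem_range] at hj
          rw [← hc j hj]
          linear_combination (p : ℚ) ^ k * a n (j + 1) * ht j hj
        push_cast at he ⊢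
        linear_combination (p : ℚ) ^ k * he - hs
  -- conclusion
  have hT : ∀ n : ℤ, -((M + 1 : ℕ) : ℤ) ≤ n → S n = ((S n).num : ℚ) := by
    intro n hn
    have : ∃ z : ℤ, S n = z := by
      rcases le_total 0 n with h | h
      · obtain ⟨z, hz⟩ := hintegral n.toNat 0 (by omega)
        refine ⟨z, ?_⟩
        rw [← hz]; congr 1; push_cast; omega
      · obtain ⟨z, hz⟩ := hintegral 0 (-n).toNat (by omega)
        refine ⟨z, ?_⟩
        rw [← hz]; congr 1; push_cast; omega
    obtain ⟨z, hz⟩ := this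
    rw [hz, Rat.num_intCast]
  refine ⟨fun n => (S n).num, hT, fun n hn => ?_⟩
  obtain ⟨n, rfl⟩ := Int.eq_ofNat_of_zero_le hn
  obtain ⟨K, hK⟩ := hdiv n
  have hd := hK (Finset.gcd (Finset.range (M + 1 + 1)) (fun j => (S ((n : ℤ) - (j : ℤ))).num)) 1 (by
    intro j hj
    obtain ⟨e, he⟩ := Finset.gcd_dvd (f := fun j : ℕ => (S ((n : ℤ) - (j : ℤ))).num)
      (Finset.mem_range.mpr hj)
    refine ⟨e, ?_⟩
    rw [Int.cast_one, one_mul, hT _ (by push_cast; omega)]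
    exact_mod_cast he)
  rw [one_mul, dvd_prime_pow (Nat.prime_iff_prime_int.mp hp.out)] at hd
  obtain ⟨k, -, hk⟩ := hd
  refine ⟨k, ?_⟩
  rw [← Finset.normalize_gcd, normalize_eq_normalize_iff_associated.mpr hk]
  exact Int.normalize_of_nonneg (by positivity)
end

section
/- For an infinite run of the p-adic Jacobi–Perron algorithm with a ℚ-linear dependence relation as above, the sequence (S_n) satisfies |S_n|_p < max_{1 ≤ i ≤ m} |S_{n-i}|_p for every n ≥ 1; consequently S_n → 0 in ℚ_p as n → ∞. -/
open Finset Filter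

/-- A sequence contracted by each window of length `m` tends to zero. -/
lemma window_contract_tendsto (m : ℕ) (T : ℤ → ℝ) (c : ℝ) (hc0 : 0 ≤ c) (hc1 : c < 1)
    (h0 : ∀ k, 0 ≤ T k)
    (hT : ∀ k : ℤ, 0 ≤ k → ∀ C : ℝ, 0 ≤ C → (∀ i ∈ Finset.Icc 1 m, T (k - (i : ℤ)) ≤ C) →
      T k ≤ c * C) :
    Filter.Tendsto (fun n : ℕ => T n) Filter.atTop (nhds 0) := by
  set C : ℝ := ∑ i ∈ Finset.Icc 1 m, T (-(i : ℤ)) with hC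
  have hCnn : 0 ≤ C := Finset.sum_nonneg fun i _ => h0 _
  have neg : ∀ i ∈ Finset.Icc 1 m, T (-(i : ℤ)) ≤ C := fun i hi =>
    Finset.single_le_sum (f := fun i : ℕ => T (-(i : ℤ))) (fun i _ => h0 _) hi
  have negk : ∀ k : ℤ, -(m : ℤ) ≤ k → k < 0 → T k ≤ C := by
    intro k h1 h2
    have := neg (-k).toNat (by simp only [Finset.mem_Icc]; omega)
    rwa [Int.toNat_of_nonneg (by omega), neg_neg] at this
  have base : ∀ n : ℕ, T n ≤ C := by
    intro n
    induction n using Nat.strong_induction_on with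
    | _ n ih =>
      have h := hT n (by omega) C hCnn (by
        intro i hi
        simp only [Finset.mem_Icc] at hi
        by_cases hlt : (n : ℤ) - i < 0
        · exact negk _ (by omega) hlt
        · have := ih (n - i) (by omega)
          rwa [Nat.cast_sub (by omega)] at this)
      nlinarith
  have main : ∀ j : ℕ, ∀ k : ℤ, (j : ℤ) * m - m ≤ k → T k ≤ c ^ j * C := by
    intro j
    induction j with
    | zero =>
      intro k hk
      simp only [Nat.cast_zero, zero_mul, zero_sub] at hk
      rw [pow_zero, one_mul]
      by_cases hlt : k < 0
      · exact negk k hk hlt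
      · have := base k.toNat
        rwa [Int.toNat_of_nonneg (by omega)] at this
    | succ j ih =>
      intro k hk
      have hjm : (0 : ℤ) ≤ (j : ℤ) * m := by positivity
      push_cast at hk
      have hk' : (j : ℤ) * m ≤ k := by linarith
      have := hT k (by linarith) (c ^ j * C) (by positivity) (by
        intro i hi
        simp only [Finset.mem_Icc] at hi
        exact ih _ (by have : (i : ℤ) ≤ m := by exact_mod_cast hi.2
                       linarith))
      rw [pow_succ]
      linarith
  rw [Metric.tendsto_atTop]
  intro ε hε
  have hlim : Filter.Tendsto (fun j : ℕ => c ^ j * C) Filter.atTop (nhds 0) := by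
    simpa using (tendsto_pow_atTop_nhds_zero_of_lt_one hc0 hc1).mul_const C
  obtain ⟨j, hj⟩ := (hlim.eventually (gt_mem_nhds hε)).exists
  refine ⟨j * m, fun n hn => ?_⟩
  rw [Real.dist_eq, sub_zero, abs_of_nonneg (h0 _)]
  refine lt_of_le_of_lt (main j n ?_) hj
  have : (j : ℤ) * m ≤ n := by exact_mod_cast hn
  have : (0 : ℤ) ≤ m := by positivity
  linarith

/-- For an infinite run with a `ℚ`-linear dependence relation with coprime
integer coefficients, `|Sₙ|_p < max_{1 ≤ i ≤ m} |S_{n-i}|_p` for every `n ≥ 1`, and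
consequently `Sₙ → 0` in `ℚ_p`. -/
theorem jacobiPerron_S_padic_decrease (p m : ℕ) [hp : Fact p.Prime]
    (hp2 : 2 < p) (hm : 1 ≤ m)
    (α : ℕ → ℕ → ℚ_[p]) (a : ℕ → ℕ → ℚ) (A : ℤ → ℕ → ℚ)
    (hrun : JPRun p m α a) (hconv : JPConv m a A)
    (x : ℕ → ℤ) (hgcd : Finset.gcd (Finset.Icc 1 (m + 1)) x = 1)
    (hdep : (∑ i ∈ Finset.Icc 1 m, ((x i : ℚ) : ℚ_[p]) * α 0 i) + ((x (m + 1) : ℤ) : ℚ_[p]) = 0)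
    (S : ℤ → ℚ)
    (hS : ∀ n : ℤ, S n = ∑ i ∈ Finset.Icc 1 (m + 1), (x i : ℚ) * A (n - 1) i) :
    (∀ n : ℤ, 1 ≤ n →
      padicNorm p (S n) <
        (Finset.Icc 1 m).sup' (Finset.nonempty_Icc.mpr hm)
          (fun i => padicNorm p (S (n - (i : ℤ))))) ∧
    Filter.Tendsto (fun n : ℕ => ((S n : ℚ) : ℚ_[p])) Filter.atTop (nhds 0) := by
  obtain ⟨hA0, hA⟩ := hconv
  -- initial values and recurrence of S
  have hinit : ∀ j ∈ Finset.Icc 1 (m + 1), S (1 - (j : ℤ)) = x j := by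
    intro j hj
    rw [hS, Finset.sum_eq_single_of_mem j hj]
    · rw [show (1 - (j : ℤ) - 1) = -(j : ℤ) by ring, hA0 j hj j hj]; simp
    · intro i hi hij
      rw [show (1 - (j : ℤ) - 1) = -(j : ℤ) by ring, hA0 i hi j hj, if_neg hij, mul_zero]
  have hrec : ∀ n : ℕ, S ((n : ℤ) + 1) =
      (∑ j ∈ Finset.Icc 1 m, a n j * S ((n : ℤ) + 1 - j)) + S ((n : ℤ) - m) := by
    intro n
    simp only [hS]
    rw [show (n : ℤ) + 1 - 1 = n by ring]
    rw [Finset.sum_congr rfl (fun i hi => by rw [hA n i hi])]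
    simp only [mul_add, Finset.sum_add_distrib, Finset.mul_sum]
    congr 1
    · rw [Finset.sum_comm]
      refine Finset.sum_congr rfl fun j _ => Finset.sum_congr rfl fun i _ => ?_
      rw [show (n : ℤ) + 1 - j - 1 = n - j by ring]; ring
  -- the key identities
  have hcomb : ∀ n : ℕ,
      (∑ i ∈ Finset.Icc 1 m, α n i * ((S ((n : ℤ) + 1 - i) : ℚ) : ℚ_[p])) +
        ((S ((n : ℤ) - m) : ℚ) : ℚ_[p]) = 0 →
      ((S ((n : ℤ) + 1) : ℚ) : ℚ_[p]) =
        -∑ i ∈ Finset.Icc 1 m, (α n i - ((a n i : ℚ) : ℚ_[p])) *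
          ((S ((n : ℤ) + 1 - i) : ℚ) : ℚ_[p]) := by
    intro n h
    rw [hrec n]
    push_cast
    simp only [sub_mul, Finset.sum_sub_distrib]
    linear_combination h
  have hid : ∀ n : ℕ,
      (∑ i ∈ Finset.Icc 1 m, α n i * ((S ((n : ℤ) + 1 - i) : ℚ) : ℚ_[p])) +
        ((S ((n : ℤ) - m) : ℚ) : ℚ_[p]) = 0 := by
    intro n
    induction n with
    | zero =>
      rw [← hdep]
      have h1 := hinit (m + 1) (by simp)
      rw [show (1 - ((m + 1 : ℕ) : ℤ)) = ((0 : ℕ) : ℤ) - m by push_cast; ring] at h1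
      rw [h1]
      congr 1
      · refine Finset.sum_congr rfl fun i hi => ?_
        have h2 := hinit i (by simp only [Finset.mem_Icc] at hi ⊢; omega)
        rw [show ((0 : ℕ) : ℤ) + 1 - (i : ℤ) = 1 - i by push_cast; ring, h2, mul_comm]
    | succ n ih =>
      have h := hcomb n ih
      obtain ⟨-, hne, h1, h2⟩ := hrun n
      obtain ⟨k, rfl⟩ : ∃ k, m = k + 1 := ⟨m - 1, by omega⟩
      set d := α n (k + 1) - ((a n (k + 1) : ℚ) : ℚ_[p]) with hd
      have hd0 : d ≠ 0 := sub_ne_zero.mpr hne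
      have e1 : Finset.Icc 1 (k + 1) = insert (k + 1) (Finset.Icc 1 k) := by
        ext t; simp only [Finset.mem_Icc, Finset.mem_insert]; omega
      have hsplit : ∀ f : ℕ → ℚ_[p], ∑ i ∈ Finset.Icc 1 (k + 1), f i =
          f 1 + ∑ i ∈ Finset.Icc 1 k, f (i + 1) := by
        intro f
        clear * -
        induction k with
        | zero => simp
        | succ k ih =>
          rw [Finset.sum_Icc_succ_top (by omega), ih,
            Finset.sum_Icc_succ_top (by omega : 1 ≤ k + 1), add_assoc]
      rw [hsplit, h1]
      rw [e1, Finset.sum_insert (by simp), ← hd] at h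
      have hs : ∑ i ∈ Finset.Icc 1 k, α (n + 1) (i + 1) *
            ((S (((n + 1 : ℕ) : ℤ) + 1 - ((i + 1 : ℕ) : ℤ)) : ℚ) : ℚ_[p]) =
          d⁻¹ * ∑ i ∈ Finset.Icc 1 k, (α n i - ((a n i : ℚ) : ℚ_[p])) *
          ((S ((n : ℤ) + 1 - i) : ℚ) : ℚ_[p]) := by
        rw [Finset.mul_sum]
        refine Finset.sum_congr rfl fun i hi => ?_
        rw [h2 (i + 1) (by simp only [Finset.mem_Icc] at hi ⊢; omega), Nat.add_sub_cancel]
        rw [show ((n + 1 : ℕ) : ℤ) + 1 - ((i + 1 : ℕ) : ℤ) = n + 1 - i by push_cast; ring]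
        field_simp
      rw [hs]
      rw [show ((n + 1 : ℕ) : ℤ) + 1 - ((1 : ℕ) : ℤ) = n + 1 by push_cast; ring,
        show ((n + 1 : ℕ) : ℤ) - ((k + 1 : ℕ) : ℤ) = n + 1 - ((k + 1 : ℕ) : ℤ) by push_cast; ring, h]
      field_simp
      ring
  have hkey : ∀ n : ℕ, ((S ((n : ℤ) + 1) : ℚ) : ℚ_[p]) =
        -∑ i ∈ Finset.Icc 1 m, (α n i - ((a n i : ℚ) : ℚ_[p])) *
          ((S ((n : ℤ) + 1 - i) : ℚ) : ℚ_[p]) := fun n => hcomb n (hid n)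
  have hp1 : (1 : ℝ) < p := by exact_mod_cast hp.out.one_lt
  have hc0 : (0 : ℝ) ≤ (p : ℝ)⁻¹ := by positivity
  have hc1 : (p : ℝ)⁻¹ < 1 := inv_lt_one_of_one_lt₀ hp1
  have hsmall : ∀ z : ℚ_[p], ‖z‖ < 1 → ‖z‖ ≤ (p : ℝ)⁻¹ := by
    intro z hz
    have := (Padic.norm_le_pow_iff_norm_lt_pow_add_one z (-1)).mpr (by simpa using hz)
    simpa using this
  have hcontr : ∀ n : ℕ, ∀ C : ℝ, 0 ≤ C →
      (∀ i ∈ Finset.Icc 1 m, ‖((S ((n : ℤ) + 1 - i) : ℚ) : ℚ_[p])‖ ≤ C) →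
      ‖((S ((n : ℤ) + 1) : ℚ) : ℚ_[p])‖ ≤ (p : ℝ)⁻¹ * C := by
    intro n C hC hi
    rw [hkey n, norm_neg]
    refine IsUltrametricDist.norm_sum_le_of_forall_le_of_nonneg (by positivity) fun i him => ?_
    rw [norm_mul]
    exact mul_le_mul (hsmall _ ((hrun n).1 i him).2.2) (hi i him) (norm_nonneg _) hc0
  -- nonvanishing
  have hdown : ∀ n : ℕ, (∀ i ∈ Finset.Icc 1 (m + 1), S ((n : ℤ) + 1 - i) = 0) → False := by
    intro n
    induction n with
    | zero =>
      intro h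
      have hx : ∀ j ∈ Finset.Icc 1 (m + 1), x j = 0 := by
        intro j hj
        have h1 := h j hj
        rw [show ((0 : ℕ) : ℤ) + 1 - (j : ℤ) = 1 - j by push_cast; ring, hinit j hj] at h1
        exact_mod_cast h1
      rw [Finset.gcd_eq_zero_iff.mpr hx] at hgcd
      exact zero_ne_one hgcd
    | succ n ih =>
      intro h
      have h' : ∀ i : ℕ, i ≤ m → S ((n : ℤ) + 1 - i) = 0 := by
        intro i hi
        have := h (i + 1) (by simp only [Finset.mem_Icc]; omega)
        rwa [show ((n + 1 : ℕ) : ℤ) + 1 - ((i + 1 : ℕ) : ℤ) = n + 1 - i by push_cast; ring] at this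
      apply ih
      intro i hi
      simp only [Finset.mem_Icc] at hi
      by_cases him : i ≤ m
      · exact h' i him
      · have e : i = m + 1 := by omega
        have hr := hrec n
        rw [Finset.sum_eq_zero (fun j hj => by
          rw [h' j (Finset.mem_Icc.mp hj).2, mul_zero])] at hr
        have h0 := h' 0 (by omega)
        rw [Nat.cast_zero, sub_zero] at h0
        rw [h0, zero_add] at hr
        rw [e, show (n : ℤ) + 1 - ((m + 1 : ℕ) : ℤ) = n - m by push_cast; ring]
        exact hr.symm
  have hnz : ∀ n : ℕ, ∃ i ∈ Finset.Icc 1 m, S ((n : ℤ) + 1 - i) ≠ 0 := by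
    intro n
    by_contra! hall
    apply hdown n
    intro i hi
    by_cases him : i ≤ m
    · exact hall i (by simp only [Finset.mem_Icc] at hi ⊢; omega)
    · have e : i = m + 1 := by simp only [Finset.mem_Icc] at hi; omega
      have h := hid n
      rw [Finset.sum_eq_zero (fun j hj => by rw [hall j hj, Rat.cast_zero, mul_zero]),
        zero_add] at h
      rw [e, show (n : ℤ) + 1 - ((m + 1 : ℕ) : ℤ) = n - m by push_cast; ring]
      exact_mod_cast h
  refine ⟨?_, ?_⟩
  · intro n hn
    obtain ⟨k, rfl⟩ : ∃ k : ℕ, n = (k : ℤ) + 1 := ⟨(n - 1).toNat, by omega⟩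
    obtain ⟨i₀, hi₀, hmax⟩ := Finset.exists_max_image (Finset.Icc 1 m)
      (fun i : ℕ => padicNorm p (S ((k : ℤ) + 1 - (i : ℤ)))) (Finset.nonempty_Icc.mpr hm)
    rw [Finset.lt_sup'_iff]
    refine ⟨i₀, hi₀, ?_⟩
    have hb := hcontr k ‖((S ((k : ℤ) + 1 - i₀) : ℚ) : ℚ_[p])‖ (norm_nonneg _) (by
      intro i hi
      rw [Padic.eq_padicNorm, Padic.eq_padicNorm]
      exact_mod_cast hmax i hi)
    obtain ⟨i₁, hi₁, hne⟩ := hnz k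
    have hpos : 0 < padicNorm p (S ((k : ℤ) + 1 - i₀)) :=
      lt_of_lt_of_le (lt_of_le_of_ne (padicNorm.nonneg _) (Ne.symm (padicNorm.nonzero hne)))
        (hmax i₁ hi₁)
    rw [Padic.eq_padicNorm, Padic.eq_padicNorm] at hb
    have hposR : (0 : ℝ) < (padicNorm p (S ((k : ℤ) + 1 - i₀)) : ℚ) := by exact_mod_cast hpos
    have : ((padicNorm p (S ((k : ℤ) + 1)) : ℚ) : ℝ) < (padicNorm p (S ((k : ℤ) + 1 - i₀)) : ℚ) := by
      nlinarith
    exact_mod_cast this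
  · have h := window_contract_tendsto m (fun k => ‖((S (k + 1) : ℚ) : ℚ_[p])‖) (p : ℝ)⁻¹ hc0 hc1
      (fun _ => norm_nonneg _) (by
        intro k hk C hC hi
        obtain ⟨k, rfl⟩ := Int.eq_ofNat_of_zero_le hk
        refine hcontr k C hC fun i him => ?_
        have := hi i him
        rwa [show (k : ℤ) - i + 1 = k + 1 - i by ring] at this)
    rw [← Filter.tendsto_add_atTop_iff_nat 1]
    rw [tendsto_zero_iff_norm_tendsto_zero]
    simpa using h
end

section
/- For an infinite run of the p-adic Jacobi–Perron algorithm with a ℚ-linear dependence relation as above, for every n ≥ 1 the integer S_n is divisible by p^{⌈n/m⌉}; in particular, writing n = qm + r with 1 ≤ r ≤ m, one has v_p(S_n) > q, and v_p(S_n) > ⌊n/m⌋ whenever m does not divide n. -/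
open Finset Filter

theorem InZInvP.add'_s11 {p : ℕ} (hp : p ≠ 0) {a b : ℚ} (ha : InZInvP p a) (hb : InZInvP p b) :
    InZInvP p (a + b) := by
  obtain ⟨z, k, rfl⟩ := ha
  obtain ⟨w, l, rfl⟩ := hb
  refine ⟨z * p ^ l + w * p ^ k, k + l, ?_⟩
  have : (p : ℚ) ≠ 0 := by exact_mod_cast hp
  push_cast
  rw [pow_add]
  field_simp

theorem InZInvP.mul'_s11 {p : ℕ} {a b : ℚ} (ha : InZInvP p a) (hb : InZInvP p b) :
    InZInvP p (a * b) := by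
  obtain ⟨z, k, rfl⟩ := ha
  obtain ⟨w, l, rfl⟩ := hb
  refine ⟨z * w, k + l, ?_⟩
  push_cast
  rw [pow_add, div_mul_div_comm]

theorem InZInvP.ofInt (p : ℕ) (z : ℤ) : InZInvP p (z : ℚ) := ⟨z, 0, by simp⟩

theorem sum_Icc_one_eq {M : Type*} [AddCommMonoid M] (f : ℕ → M) (m : ℕ) :
    ∑ i ∈ Finset.Icc 1 m, f i = ∑ i ∈ Finset.range m, f (i + 1) := by
  induction m with
  | zero => simp
  | succ k ih => rw [Finset.sum_Icc_succ_top (by omega), ih, Finset.sum_range_succ]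

theorem exists_int_of_norm_le {p : ℕ} [hp : Fact p.Prime] {q : ℚ} (hq : InZInvP p q) (j : ℕ)
    (h : ‖(q : ℚ_[p])‖ ≤ (p : ℝ) ^ (-(j : ℤ))) :
    ∃ z : ℤ, q = (z : ℚ) ∧ (p : ℤ) ^ j ∣ z := by
  obtain ⟨z, k, rfl⟩ := hq
  have hp0 : (0 : ℝ) < p := by exact_mod_cast hp.out.pos
  have hpq : (p : ℚ) ≠ 0 := by exact_mod_cast hp.out.ne_zero
  have h2 : ‖((z : ℤ) : ℚ_[p])‖ ≤ (p : ℝ) ^ (-((j + k : ℕ) : ℤ)) := by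
    push_cast at h
    rw [norm_div, norm_pow, Padic.norm_p, div_le_iff₀ (by positivity)] at h
    refine h.trans (le_of_eq ?_)
    rw [← zpow_neg_one, ← zpow_natCast, ← zpow_mul, ← zpow_add₀ hp0.ne']
    congr 1
    push_cast
    ring
  rw [Padic.norm_int_le_pow_iff_dvd] at h2
  obtain ⟨w, hw⟩ := h2
  refine ⟨p ^ j * w, ?_, dvd_mul_right _ _⟩
  rw [hw]
  push_cast
  rw [pow_add]
  field_simp

/-- For an infinite run with a `ℚ`-linear dependence relation with coprime
integer coefficients, for every `n ≥ 1` the integer `Sₙ` is divisible by `p^⌈n/m⌉`; in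
particular, writing `n = q·m + r` with `1 ≤ r ≤ m`, one has `v_p(Sₙ) > q`, and
`v_p(Sₙ) > ⌊n/m⌋` whenever `m ∤ n` (the disjunct `Sₙ = 0` accounts for `v_p(0) = +∞`). -/
theorem jacobiPerron_S_divisibility (p m : ℕ) [hp : Fact p.Prime]
    (hp2 : 2 < p) (hm : 1 ≤ m)
    (α : ℕ → ℕ → ℚ_[p]) (a : ℕ → ℕ → ℚ) (A : ℤ → ℕ → ℚ)
    (hrun : JPRun p m α a) (hconv : JPConv m a A)
    (x : ℕ → ℤ) (hgcd : Finset.gcd (Finset.Icc 1 (m + 1)) x = 1)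
    (hdep : (∑ i ∈ Finset.Icc 1 m, ((x i : ℚ) : ℚ_[p]) * α 0 i) + ((x (m + 1) : ℤ) : ℚ_[p]) = 0)
    (S : ℤ → ℚ)
    (hS : ∀ n : ℤ, S n = ∑ i ∈ Finset.Icc 1 (m + 1), (x i : ℚ) * A (n - 1) i) :
    ∀ n : ℕ, 1 ≤ n →
      (∃ z : ℤ, S n = (z : ℚ) ∧ (p : ℤ) ^ ((n + m - 1) / m) ∣ z) ∧
      (∀ q r : ℕ, 1 ≤ r → r ≤ m → n = q * m + r →
        S n = 0 ∨ (q : ℤ) < padicValRat p (S n)) ∧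
      (¬ (m ∣ n) → S n = 0 ∨ ((n / m : ℕ) : ℤ) < padicValRat p (S n)) := by
  have hp0 : p ≠ 0 := hp.out.ne_zero
  have hpR : (0 : ℝ) < p := by exact_mod_cast hp.out.pos
  -- initial values
  have hinit : ∀ j ∈ Finset.Icc 1 (m + 1), S (1 - (j : ℤ)) = (x j : ℚ) := by
    intro j hj
    rw [hS, Finset.sum_eq_single j]
    · have : (1 - (j : ℤ) - 1) = -(j : ℤ) := by ring
      rw [this, hconv.1 j hj j hj]; simp
    · intro b hb hbj
      have : (1 - (j : ℤ) - 1) = -(j : ℤ) := by ring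
      rw [this, hconv.1 b hb j hj]; simp [hbj]
    · intro h; exact absurd hj h
  -- recursion
  have hrec : ∀ n : ℕ, S ((n : ℤ) + 1) =
      (∑ j ∈ Finset.Icc 1 m, a n j * S ((n : ℤ) + 1 - j)) + S ((n : ℤ) - m) := by
    intro n
    simp only [hS]
    have e : ∀ i ∈ Finset.Icc 1 (m + 1), (x i : ℚ) * A ((n : ℤ) + 1 - 1) i =
        (∑ j ∈ Finset.Icc 1 m, a n j * ((x i : ℚ) * A ((n : ℤ) + 1 - j - 1) i))
          + (x i : ℚ) * A ((n : ℤ) - m - 1) i := by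
      intro i hi
      rw [add_sub_cancel_right, hconv.2 n i hi, mul_add, Finset.mul_sum]
      congr 1
      refine Finset.sum_congr rfl fun j _ => ?_
      have : (n : ℤ) + 1 - j - 1 = n - j := by ring
      rw [this]; ring
    rw [Finset.sum_congr rfl e, Finset.sum_add_distrib, Finset.sum_comm]
    simp only [Finset.mul_sum]
  -- the linear relation and its consequence
  have hstep : ∀ n : ℕ,
      (∑ j ∈ Finset.Icc 1 m, α n j * ((S ((n : ℤ) + 1 - j) : ℚ) : ℚ_[p]))
        + ((S ((n : ℤ) - m) : ℚ) : ℚ_[p]) = 0 →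
      ((S ((n : ℤ) + 1) : ℚ) : ℚ_[p]) =
        ∑ j ∈ Finset.Icc 1 m, ((a n j : ℚ_[p]) - α n j) * ((S ((n : ℤ) + 1 - j) : ℚ) : ℚ_[p]) := by
    intro n h
    rw [hrec n]
    push_cast
    simp only [sub_mul, Finset.sum_sub_distrib]
    linear_combination h
  have hrel : ∀ n : ℕ,
      (∑ j ∈ Finset.Icc 1 m, α n j * ((S ((n : ℤ) + 1 - j) : ℚ) : ℚ_[p]))
        + ((S ((n : ℤ) - m) : ℚ) : ℚ_[p]) = 0 := by
    intro n
    induction n with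
    | zero =>
      rw [← hdep]
      congr 1
      · refine Finset.sum_congr rfl fun j hj => ?_
        have hj' : j ∈ Finset.Icc 1 (m + 1) := by
          simp only [Finset.mem_Icc] at hj ⊢; omega
        have := hinit j hj'
        simp only [Nat.cast_zero, zero_add]
        rw [this, mul_comm]
      · have := hinit (m + 1) (by simp)
        have e : ((0 : ℕ) : ℤ) - m = 1 - ((m + 1 : ℕ) : ℤ) := by push_cast; ring
        rw [e, this]; simp
    | succ n ih =>
      have h1 := hstep n ih
      obtain ⟨k, rfl⟩ : ∃ k, m = k + 1 := ⟨m - 1, by omega⟩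
      obtain ⟨-, hne, hα1, hαi⟩ := hrun n
      set δ := α n (k + 1) - ((a n (k + 1) : ℚ) : ℚ_[p]) with hδ
      have hδ0 : δ ≠ 0 := sub_ne_zero.mpr hne
      have hb : ∀ i ∈ Finset.range k,
          α (n + 1) (i + 1 + 1) * δ = α n (i + 1) - (a n (i + 1) : ℚ_[p]) := by
        intro i hi
        rw [hαi (i + 1 + 1) (by simp only [Finset.mem_Icc, Finset.mem_range] at hi ⊢; omega)]
        rw [div_mul_cancel₀ _ hδ0]
        simp
      apply mul_left_cancel₀ hδ0
      rw [mul_zero, mul_add, sum_Icc_one_eq, Finset.sum_range_succ', mul_add, Finset.mul_sum]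
      rw [sum_Icc_one_eq, Finset.sum_range_succ] at h1
      have e1 : ∑ i ∈ Finset.range k, δ * (α (n + 1) (i + 1 + 1) *
            ((S (((n + 1 : ℕ) : ℤ) + 1 - ((i + 1 + 1 : ℕ) : ℤ)) : ℚ) : ℚ_[p])) =
          - ∑ i ∈ Finset.range k, ((a n (i + 1) : ℚ_[p]) - α n (i + 1)) *
            ((S ((n : ℤ) + 1 - ((i + 1 : ℕ) : ℤ)) : ℚ) : ℚ_[p]) := by
        rw [← Finset.sum_neg_distrib]
        refine Finset.sum_congr rfl fun i hi => ?_
        have e : (((n + 1 : ℕ) : ℤ) + 1 - ((i + 1 + 1 : ℕ) : ℤ)) =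
          (n : ℤ) + 1 - ((i + 1 : ℕ) : ℤ) := by push_cast; ring
        rw [e]
        linear_combination ((S ((n : ℤ) + 1 - ((i + 1 : ℕ) : ℤ)) : ℚ) : ℚ_[p]) * hb i hi
      rw [e1]
      have e2 : (((n + 1 : ℕ) : ℤ) + 1 - ((0 + 1 : ℕ) : ℤ)) = (n : ℤ) + 1 := by push_cast; ring
      have e3 : (((n + 1 : ℕ) : ℤ) - ((k + 1 : ℕ) : ℤ)) = (n : ℤ) + 1 - ((k + 1 : ℕ) : ℤ) := by
        push_cast; ring
      rw [e2, e3]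
      have e4 : δ * α (n + 1) (0 + 1) = 1 := by
        rw [zero_add, hα1, mul_inv_cancel₀ hδ0]
      linear_combination ((S ((n : ℤ) + 1) : ℚ) : ℚ_[p]) * e4 + h1
        + ((S ((n : ℤ) + 1 - ((k + 1 : ℕ) : ℤ)) : ℚ) : ℚ_[p]) * hδ
  have hkey : ∀ n : ℕ, ∀ C : ℝ, 0 ≤ C →
      (∀ j ∈ Finset.Icc 1 m, ‖((S ((n : ℤ) + 1 - j) : ℚ) : ℚ_[p])‖ ≤ C) →
      ‖((S ((n : ℤ) + 1) : ℚ) : ℚ_[p])‖ ≤ (p : ℝ) ^ (-1 : ℤ) * C := by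
    intro n C hC h
    rw [hstep n (hrel n)]
    refine IsUltrametricDist.norm_sum_le_of_forall_le_of_nonneg (by positivity) fun j hj => ?_
    rw [norm_mul]
    refine mul_le_mul ?_ (h j hj) (norm_nonneg _) (by positivity)
    have h1 := ((hrun n).1 j hj).2.2
    rw [norm_sub_rev] at h1
    rw [Padic.norm_le_pow_iff_norm_lt_pow_add_one]
    simpa using h1
  have hlow : ∀ n : ℤ, -(m : ℤ) < n → n ≤ 0 → ∃ z : ℤ, S n = (z : ℚ) := by
    intro n h1 h2
    obtain ⟨j, hj⟩ := Int.eq_ofNat_of_zero_le (show 0 ≤ 1 - n by omega)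
    have := hinit j (by simp only [Finset.mem_Icc]; omega)
    exact ⟨x j, by rw [← this]; congr 1; omega⟩
  have hlow' : ∃ z : ℤ, S (-(m : ℤ)) = (z : ℚ) :=
    ⟨x (m + 1), by rw [← hinit (m + 1) (by simp)]; congr 1; push_cast; ring⟩
  have hmain : ∀ N : ℕ, ∀ n : ℤ, -(m : ℤ) ≤ n → n ≤ N →
      InZInvP p (S n) ∧ (-(m : ℤ) < n → ‖((S n : ℚ) : ℚ_[p])‖ ≤ 1) := by
    intro N
    induction N with
    | zero =>
      intro n h1 h2
      rcases h1.eq_or_lt with h | h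
      · obtain ⟨z, hz⟩ := hlow'
        refine ⟨by rw [← h, hz]; exact InZInvP.ofInt p z, fun h' => by omega⟩
      · obtain ⟨z, hz⟩ := hlow n h (by simpa using h2)
        refine ⟨by rw [hz]; exact InZInvP.ofInt p z, fun _ => ?_⟩
        rw [hz]
        simpa using Padic.norm_int_le_one z
    | succ N ih =>
      intro n h1 h2
      by_cases hn : n ≤ N
      · exact ih n h1 hn
      obtain rfl : n = (N : ℤ) + 1 := by push_cast at h2; omega
      refine ⟨?_, fun _ => ?_⟩
      · rw [hrec N]
        refine InZInvP.add'_s11 hp0 ?_ (ih _ (by omega) (by omega)).1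
        refine Finset.sum_induction _ (InZInvP p) (fun _ _ => InZInvP.add'_s11 hp0)
          (by simpa using InZInvP.ofInt p 0) fun j hj => ?_
        have hj' := Finset.mem_Icc.mp hj
        exact InZInvP.mul'_s11 ((hrun N).1 j hj).1 (ih _ (by omega) (by omega)).1
      · refine (hkey N 1 zero_le_one fun j hj => ?_).trans ?_
        · have hj' := Finset.mem_Icc.mp hj
          exact (ih _ (by omega) (by omega)).2 (by omega)
        · rw [mul_one, zpow_neg_one]
          exact inv_le_one_of_one_le₀ (by exact_mod_cast hp.out.one_le)
  have hbound : ∀ k : ℕ, ∀ n : ℤ, ((k : ℤ) - 1) * m < n →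
      ‖((S n : ℚ) : ℚ_[p])‖ ≤ (p : ℝ) ^ (-(k : ℤ)) := by
    intro k
    induction k with
    | zero =>
      intro n hn
      have hn' : -(m : ℤ) < n := by simpa using hn
      simpa using (hmain n.toNat n (by omega) (by omega)).2 hn'
    | succ k ih =>
      intro n hn
      have hn' : (k : ℤ) * m < n := by simpa using hn
      have hkm : (0 : ℤ) ≤ (k : ℤ) * m := by positivity
      obtain ⟨l, rfl⟩ : ∃ l : ℕ, n = (l : ℤ) + 1 := ⟨(n - 1).toNat, by omega⟩
      refine (hkey l _ (by positivity) fun j hj => ih _ ?_).trans (le_of_eq ?_)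
      · have hj' := Finset.mem_Icc.mp hj
        rw [sub_mul, one_mul]
        omega
      · rw [← zpow_add₀ hpR.ne']
        congr 1
        push_cast
        ring
  have hdvd : ∀ n k : ℕ, ((k : ℤ) - 1) * m < n →
      ∃ z : ℤ, S n = (z : ℚ) ∧ (p : ℤ) ^ k ∣ z := fun n k h =>
    exists_int_of_norm_le (hmain n n (by omega) le_rfl).1 k (hbound k n h)
  have hval : ∀ n k : ℕ, (k : ℤ) * m < n → S n = 0 ∨ (k : ℤ) < padicValRat p (S n) := by
    intro n k h
    obtain ⟨z, hz, hd⟩ := hdvd n (k + 1) (by push_cast; simpa using h)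
    rw [hz, padicValRat.of_int]
    rcases (padicValInt_dvd_iff _ _).mp hd with h0 | h0
    · left; simp [h0]
    · right; omega
  intro n hn
  refine ⟨hdvd n _ ?_, fun q r hr hrm hq => hval n q ?_, fun hmn => hval n _ ?_⟩
  · have h1 := Nat.div_mul_le_self (n + m - 1) m
    rw [sub_mul, one_mul]
    have h2 : (((n + m - 1) / m : ℕ) : ℤ) * (m : ℤ) ≤ ((n + m - 1 : ℕ) : ℤ) := by
      exact_mod_cast h1
    omega
  · rw [hq]; push_cast; omega
  · have h1 := Nat.div_mul_le_self n m
    have h2 : n / m * m ≠ n := fun h => hmn ⟨n / m, by rw [mul_comm]; exact h.symm⟩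
    exact_mod_cast lt_of_le_of_ne h1 h2
end

section
/- Let (T_n)_{n ≥ −m} be a sequence of real numbers satisfying T_n = y_n^{(1)} T_{n-1} + ⋯ + y_n^{(m)} T_{n-m} + T_{n-m-1} for all n ≥ 1, where for every n ≥ 1 and i = 1,…,m the coefficient y_n^{(i)} is a rational number lying in ℤ[1/p] with |y_n^{(i)}|_∞ < p/2. Then lim_{n→+∞} T_n / p^n = 0 in ℝ. -/
open Finset Filter

/-- If a real sequence `(Tₙ)_{n ≥ -m}` satisfies
`Tₙ = yₙ⁽¹⁾T_{n-1} + ⋯ + yₙ⁽ᵐ⁾T_{n-m} + T_{n-m-1}` for `n ≥ 1`, where the coefficients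
`yₙ⁽ⁱ⁾` are rationals in `ℤ[1/p]` with `|yₙ⁽ⁱ⁾|_∞ < p/2`, then `Tₙ/pⁿ → 0` in `ℝ`. -/
theorem recurrence_over_Y_tendsto_zero (p m : ℕ) (hp : p.Prime) (hp2 : 2 < p) (hm : 1 ≤ m)
    (T : ℤ → ℝ) (y : ℕ → ℕ → ℚ)
    (hy : ∀ n : ℕ, 1 ≤ n → ∀ i ∈ Finset.Icc 1 m,
      InZInvP p (y n i) ∧ |y n i| < (p : ℚ) / 2)
    (hrec : ∀ n : ℕ, 1 ≤ n →
      T n = (∑ i ∈ Finset.Icc 1 m, (y n i : ℝ) * T ((n : ℤ) - i)) + T ((n : ℤ) - m - 1)) :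
    Filter.Tendsto (fun n : ℕ => T n / (p : ℝ) ^ n) Filter.atTop (nhds 0) := by
  have hp2R : (2 : ℝ) < p := by exact_mod_cast hp2
  obtain ⟨r, hr⟩ : ∃ r : ℝ, r = (p : ℝ) / 2 + 1 := ⟨_, rfl⟩
  have hr1 : 1 < r := by linarith
  have hr0 : 0 < r := by linarith
  have hrp : r < p := by linarith
  have tel : ∀ (n : ℤ) (k : ℕ),
      (r - 1) * ∑ i ∈ Finset.Icc 1 k, r ^ (n - (i : ℤ)) = r ^ n - r ^ (n - (k : ℤ)) := by
    intro n k
    induction k with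
    | zero => simp
    | succ k ih =>
      rw [Finset.sum_Icc_succ_top (by omega), mul_add, ih]
      have : r ^ (n - (k : ℤ)) = r * r ^ (n - ((k + 1 : ℕ) : ℤ)) := by
        rw [← zpow_one_add₀ hr0.ne']
        congr 1
        push_cast
        ring
      rw [this]
      ring
  obtain ⟨C, hC⟩ : ∃ C : ℝ, C = ∑ k ∈ Finset.Icc (-(m : ℤ)) 0, |T k| / r ^ k := ⟨_, rfl⟩
  have hC0 : 0 ≤ C := by
    rw [hC]
    exact Finset.sum_nonneg (fun k _ => by positivity)
  have base : ∀ k : ℤ, -(m : ℤ) ≤ k → k ≤ 0 → |T k| ≤ C * r ^ k := by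
    intro k h1 h2
    have hle : |T k| / r ^ k ≤ C := by
      rw [hC]
      exact Finset.single_le_sum (f := fun k : ℤ => |T k| / r ^ k)
        (fun k _ => by positivity) (Finset.mem_Icc.mpr ⟨h1, h2⟩)
    exact (div_le_iff₀ (zpow_pos hr0 k)).mp hle
  have main : ∀ n : ℕ, ∀ k : ℤ, -(m : ℤ) ≤ k → k ≤ n → |T k| ≤ C * r ^ k := by
    intro n
    induction n with
    | zero =>
      intro k h1 h2
      exact base k h1 (by simpa using h2)
    | succ n ih =>
      intro k h1 h2
      by_cases hk : k ≤ n
      · exact ih k h1 hk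
      have hkn : k = ((n + 1 : ℕ) : ℤ) := by push_cast at h2 ⊢; omega
      subst hkn
      rw [hrec (n + 1) (by omega)]
      generalize hN : n + 1 = N at *
      have hsum : |∑ i ∈ Finset.Icc 1 m, (y N i : ℝ) * T ((N : ℤ) - i)|
          ≤ C * ((r - 1) * ∑ i ∈ Finset.Icc 1 m, r ^ ((N : ℤ) - (i : ℤ))) := by
        refine (Finset.abs_sum_le_sum_abs _ _).trans ?_
        rw [Finset.mul_sum, Finset.mul_sum]
        refine Finset.sum_le_sum fun i hi => ?_
        have hy1 : |(y N i : ℝ)| ≤ r - 1 := by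
          have h := (hy N (by omega) i hi).2
          have h' : |(y N i : ℝ)| < (p : ℝ) / 2 := by
            have h2 := (Rat.cast_lt (K := ℝ)).mpr h
            push_cast at h2
            exact h2
          linarith
        have hi' := Finset.mem_Icc.mp hi
        have hT := ih ((N : ℤ) - i) (by omega) (by omega)
        rw [abs_mul]
        calc |(y N i : ℝ)| * |T ((N : ℤ) - i)|
            ≤ (r - 1) * (C * r ^ ((N : ℤ) - (i : ℤ))) :=
              mul_le_mul hy1 hT (abs_nonneg _) (by linarith)
          _ = _ := by ring
      rw [tel] at hsum
      have hlast := ih ((N : ℤ) - m - 1) (by omega) (by omega)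
      have hmono : r ^ ((N : ℤ) - m - 1) ≤ r ^ ((N : ℤ) - m) :=
        zpow_le_zpow_right₀ hr1.le (by omega)
      have hmono' := mul_le_mul_of_nonneg_left hmono hC0
      refine (abs_add_le _ _).trans ?_
      rw [mul_sub] at hsum
      linarith
  have hlim : Filter.Tendsto (fun n : ℕ => C * (r / p) ^ n) Filter.atTop (nhds 0) := by
    have h := (tendsto_pow_atTop_nhds_zero_of_lt_one (r := r / (p : ℝ)) (by positivity)
      ((div_lt_one (by linarith)).mpr hrp)).const_mul C
    simpa using h
  refine squeeze_zero_norm (fun n => ?_) hlim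
  have h := main n n (by omega) le_rfl
  rw [zpow_natCast] at h
  have hpp : (0 : ℝ) < (p : ℝ) ^ n := pow_pos (by linarith) n
  rw [Real.norm_eq_abs, abs_div, abs_of_pos hpp, div_pow, ← mul_div_assoc]
  exact div_le_div_of_nonneg_right h hpp.le
end

section
/- For an infinite run of the p-adic Jacobi–Perron algorithm with a ℚ-linear dependence relation as above, the real sequence S_n / p^n tends to 0 as n → ∞ (with respect to the Euclidean absolute value). -/
open Finset Filter

/-- A linear recurrence with coefficients bounded by `h` grows at most like `(h+1)^n`. -/
theorem recurrence_growth (m : ℕ) (h : ℚ) (hh : 0 < h) (a : ℕ → ℕ → ℚ) (u : ℕ → ℚ)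
    (ha : ∀ n, ∀ j ∈ Finset.Icc 1 m, |a n j| ≤ h)
    (hu : ∀ n, u (n + m + 1) = (∑ j ∈ Finset.Icc 1 m, a n j * u (n + m + 1 - j)) + u n) :
    ∃ C : ℚ, 0 ≤ C ∧ ∀ k, |u k| ≤ C * (h + 1) ^ k := by
  have hl : 1 ≤ h + 1 := by linarith
  have hl0 : 0 < h + 1 := by linarith
  refine ⟨∑ k ∈ Finset.range (m + 1), |u k|, Finset.sum_nonneg fun _ _ => abs_nonneg _, ?_⟩
  set C := ∑ k ∈ Finset.range (m + 1), |u k| with hC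
  have hC0 : 0 ≤ C := Finset.sum_nonneg fun _ _ => abs_nonneg _
  have geom : ∀ M : ℕ, ∑ j ∈ Finset.Icc 1 M, h * (1 / (h + 1) ^ j) = 1 - 1 / (h + 1) ^ M := by
    intro M
    induction M with
    | zero => simp
    | succ M ih =>
      rw [Finset.sum_Icc_succ_top (by omega), ih]
      field_simp
      ring
  intro k
  induction k using Nat.strong_induction_on with
  | _ k ih =>
    by_cases hk : k < m + 1
    · have h1 : |u k| ≤ C := Finset.single_le_sum (f := fun k => |u k|)
        (fun _ _ => abs_nonneg _) (Finset.mem_range.2 hk)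
      have h2 : 1 ≤ (h + 1) ^ k := one_le_pow₀ hl
      nlinarith
    · obtain ⟨n, rfl⟩ : ∃ n, k = n + m + 1 := ⟨k - m - 1, by omega⟩
      rw [hu n]
      have e1 : |∑ j ∈ Finset.Icc 1 m, a n j * u (n + m + 1 - j)|
          ≤ ∑ j ∈ Finset.Icc 1 m, (C * (h + 1) ^ (n + m + 1)) * (h * (1 / (h + 1) ^ j)) := by
        refine (Finset.abs_sum_le_sum_abs _ _).trans (Finset.sum_le_sum fun j hj => ?_)
        have hj' := Finset.mem_Icc.1 hj
        have h3 := ih (n + m + 1 - j) (by omega)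
        rw [abs_mul]
        refine (mul_le_mul (ha n j hj) h3 (abs_nonneg _) hh.le).trans (le_of_eq ?_)
        rw [pow_sub₀ _ hl0.ne' (by omega)]
        ring
      rw [← Finset.mul_sum, geom] at e1
      have e2 := ih n (by omega)
      refine (abs_add_le _ _).trans ?_
      have e3 : (h + 1) ^ (n + m + 1) * (1 / (h + 1) ^ m) = (h + 1) ^ n * (h + 1) := by
        rw [show n + m + 1 = n + 1 + m by ring, pow_add]
        field_simp
        ring
      have e4 : 0 ≤ C * (h + 1) ^ n * h := by positivity
      have e5 : C * (h + 1) ^ (n + m + 1) * (1 - 1 / (h + 1) ^ m)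
          = C * (h + 1) ^ (n + m + 1) - C * ((h + 1) ^ n * (h + 1)) := by
        rw [← e3]; ring
      rw [e5] at e1
      linarith

/-- For an infinite run with a `ℚ`-linear dependence relation with coprime
integer coefficients, the real sequence `Sₙ/pⁿ` tends to `0` (in the Euclidean absolute
value). -/
theorem jacobiPerron_S_over_pow_tendsto_zero (p m : ℕ) [hp : Fact p.Prime]
    (hp2 : 2 < p) (hm : 1 ≤ m)
    (α : ℕ → ℕ → ℚ_[p]) (a : ℕ → ℕ → ℚ) (A : ℤ → ℕ → ℚ)
    (hrun : JPRun p m α a) (hconv : JPConv m a A)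
    (x : ℕ → ℤ) (hgcd : Finset.gcd (Finset.Icc 1 (m + 1)) x = 1)
    (hdep : (∑ i ∈ Finset.Icc 1 m, ((x i : ℚ) : ℚ_[p]) * α 0 i) + ((x (m + 1) : ℤ) : ℚ_[p]) = 0)
    (S : ℤ → ℚ)
    (hS : ∀ n : ℤ, S n = ∑ i ∈ Finset.Icc 1 (m + 1), (x i : ℚ) * A (n - 1) i) :
    Filter.Tendsto (fun n : ℕ => ((S n : ℚ) : ℝ) / (p : ℝ) ^ n) Filter.atTop (nhds 0) := by
  obtain ⟨-, hrec⟩ := hconv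
  have hpq : (2 : ℚ) < p := by exact_mod_cast hp2
  have Srec : ∀ n : ℕ, S ((n : ℤ) + 1)
      = (∑ j ∈ Finset.Icc 1 m, a n j * S ((n : ℤ) + 1 - j)) + S ((n : ℤ) - m) := by
    intro n
    simp only [hS, Finset.mul_sum]
    rw [Finset.sum_comm, ← Finset.sum_add_distrib]
    refine Finset.sum_congr rfl fun i hi => ?_
    rw [show (n : ℤ) + 1 - 1 = n by ring, hrec n i hi, mul_add, Finset.mul_sum]
    congr 1
    refine Finset.sum_congr rfl fun j _ => ?_
    rw [show (n : ℤ) + 1 - j - 1 = n - j by ring]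
    ring
  obtain ⟨C, hC0, hC⟩ := recurrence_growth m ((p : ℚ) / 2) (by linarith) a
    (fun k => S ((k : ℤ) - m)) (fun n j hj => ((hrun n).1 j hj).2.1.le) (by
      intro n
      have := Srec n
      rw [show ((n + m + 1 : ℕ) : ℤ) - m = n + 1 by push_cast; ring, this]
      congr 1
      refine Finset.sum_congr rfl fun j hj => ?_
      have hj' := Finset.mem_Icc.1 hj
      rw [Nat.cast_sub (by omega)]
      congr 2
      push_cast
      ring)
  have hpr : (2 : ℝ) < p := by exact_mod_cast hp2
  have hlim : Filter.Tendsto (fun n : ℕ => ((C : ℝ) * ((p : ℝ) / 2 + 1) ^ m)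
      * (((p : ℝ) / 2 + 1) / p) ^ n) Filter.atTop (nhds 0) := by
    have := (tendsto_pow_atTop_nhds_zero_of_lt_one (r := ((p : ℝ) / 2 + 1) / p) (by positivity)
      (by rw [div_lt_one (by linarith)]; linarith)).const_mul ((C : ℝ) * ((p : ℝ) / 2 + 1) ^ m)
    simpa using this
  refine squeeze_zero_norm (fun n => ?_) hlim
  have h1 := hC (n + m)
  rw [show ((n + m : ℕ) : ℤ) - m = n by push_cast; ring] at h1
  have h2 : |((S n : ℚ) : ℝ)| ≤ (C : ℝ) * ((p : ℝ) / 2 + 1) ^ (n + m) := by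
    have h4 := (Rat.cast_le (K := ℝ)).2 h1
    push_cast at h4
    exact h4
  have h3 : (0 : ℝ) < (p : ℝ) ^ n := by positivity
  rw [Real.norm_eq_abs, abs_div, abs_of_pos h3, div_pow, ← mul_div_assoc]
  refine div_le_div_of_nonneg_right (h2.trans (le_of_eq ?_)) h3.le
  rw [pow_add]
  ring
end

section
/- Suppose that for some t ≥ 0 there are finite sequences of complete quotients α_n^{(i)} ∈ ℚ_p and partial quotients a_n^{(i)} (0 ≤ n ≤ t, i = 1,…,m) satisfying the p-adic Jacobi–Perron relations for all 0 ≤ n < t, and that α_t^{(m)} = a_t^{(m)} (so the algorithm terminates in finitely many steps). Then 1, α_0^{(1)}, …, α_0^{(m)} are linearly dependent over ℚ. -/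
open Finset Filter

/-- If a finite run of the `p`-adic Jacobi–Perron algorithm (complete
quotients `α n i` and partial quotients `a n i` for `0 ≤ n ≤ t`, satisfying the recurrences
for `0 ≤ n < t`) terminates, i.e. `α t m = a t m`, then `1, α₀⁽¹⁾, …, α₀⁽ᵐ⁾` are linearly
dependent over `ℚ`. -/
theorem jacobiPerron_finite_implies_lin_dep (p m : ℕ) [hp : Fact p.Prime]
    (hp2 : 2 < p) (hm : 1 ≤ m)
    (t : ℕ) (α : ℕ → ℕ → ℚ_[p]) (a : ℕ → ℕ → ℚ)
    (hs : ∀ n ≤ t, ∀ i ∈ Finset.Icc 1 m, IsSValue p (α n i) (a n i))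
    (hrec : ∀ n < t,
      α n m ≠ ((a n m : ℚ) : ℚ_[p]) ∧
      α (n + 1) 1 = (α n m - ((a n m : ℚ) : ℚ_[p]))⁻¹ ∧
      ∀ i ∈ Finset.Icc 2 m,
        α (n + 1) i = (α n (i - 1) - ((a n (i - 1) : ℚ) : ℚ_[p])) / (α n m - ((a n m : ℚ) : ℚ_[p])))
    (hterm : α t m = ((a t m : ℚ) : ℚ_[p])) :
    ∃ c : ℕ → ℚ, (∃ i ∈ Finset.Icc 1 (m + 1), c i ≠ 0) ∧
      (∑ i ∈ Finset.Icc 1 m, ((c i : ℚ) : ℚ_[p]) * α 0 i) + ((c (m + 1) : ℚ) : ℚ_[p]) = 0 := by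
  have hconv : ∀ (f : ℕ → ℚ_[p]) (k : ℕ),
      ∑ i ∈ Finset.Icc 1 k, f i = ∑ i ∈ Finset.range k, f (i + 1) := by
    intro f k
    induction k with
    | zero => simp
    | succ k ih => rw [Finset.sum_Icc_succ_top (by omega), ih, Finset.sum_range_succ]
  have key : ∀ k n, n + k = t → ∃ c : ℕ → ℚ, (∃ i ∈ Finset.Icc 1 (m + 1), c i ≠ 0) ∧
      (∑ i ∈ Finset.Icc 1 m, ((c i : ℚ) : ℚ_[p]) * α n i) + ((c (m + 1) : ℚ) : ℚ_[p]) = 0 := by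
    intro k
    induction k with
    | zero =>
      intro n hn
      obtain rfl : n = t := by omega
      refine ⟨fun i => if i = m then 1 else if i = m + 1 then - a n m else 0,
        ⟨m, by simp [hm], by simp⟩, ?_⟩
      rw [Finset.sum_eq_single m]
      · simp [hterm]
      · intro b hb hbm
        have : b ≠ m + 1 := by simp at hb; omega
        simp [hbm, this]
      · intro h
        simp at h
        omega
    | succ k ih =>
      intro n hn
      obtain ⟨c, ⟨i, hi, hci⟩, hc⟩ := ih (n + 1) (by omega)
      obtain ⟨hne, h1, h2⟩ := hrec n (by omega)
      obtain ⟨r, rfl⟩ : ∃ r, m = r + 1 := ⟨m - 1, by omega⟩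
      have hd : α n (r + 1) - ((a n (r + 1) : ℚ) : ℚ_[p]) ≠ 0 := sub_ne_zero.mpr hne
      refine ⟨fun j => if j = r + 2 then
          c 1 - ∑ j ∈ Finset.range (r + 1), c (j + 2) * a n (j + 1) else c (j + 1), ?_, ?_⟩
      · by_cases h : ∃ j ∈ Finset.range (r + 1), c (j + 2) ≠ 0
        · obtain ⟨j, hj, hcj⟩ := h
          simp at hj
          refine ⟨j + 1, by simp; omega, ?_⟩
          have : j ≠ r + 1 := by omega
          simpa [this] using hcj
        · push Not at h
          refine ⟨r + 2, by simp, ?_⟩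
          have h0 : ∑ j ∈ Finset.range (r + 1), c (j + 2) * a n (j + 1) = 0 :=
            Finset.sum_eq_zero fun j hj => by rw [h j hj, zero_mul]
          simp only [if_true, h0, sub_zero]
          simp at hi
          by_cases hi1 : i = 1
          · rwa [← hi1]
          · exfalso
            apply hci
            have := h (i - 2) (by simp; omega)
            rwa [show i - 2 + 2 = i by omega] at this
      · set d := α n (r + 1) - ((a n (r + 1) : ℚ) : ℚ_[p]) with hdd
        rw [hconv, Finset.sum_range_succ'] at hc
        have e1 : ∑ j ∈ Finset.range r, ((c (j + 1 + 1) : ℚ) : ℚ_[p]) * α (n + 1) (j + 1 + 1)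
            = (∑ j ∈ Finset.range r, ((c (j + 2) : ℚ) : ℚ_[p]) *
              (α n (j + 1) - ((a n (j + 1) : ℚ) : ℚ_[p]))) / d := by
          rw [Finset.sum_div]
          refine Finset.sum_congr rfl fun j hj => ?_
          simp at hj
          rw [h2 (j + 1 + 1) (by simp; omega)]
          simp [mul_div_assoc]
        rw [e1, zero_add, h1] at hc
        field_simp at hc
        rw [hconv]
        have e2 : ∑ j ∈ Finset.range (r + 1), (((if j + 1 = r + 2 then
            c 1 - ∑ j ∈ Finset.range (r + 1), c (j + 2) * a n (j + 1) else c (j + 1 + 1) : ℚ)) : ℚ_[p])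
              * α n (j + 1)
            = ∑ j ∈ Finset.range (r + 1), ((c (j + 2) : ℚ) : ℚ_[p]) * α n (j + 1) := by
          refine Finset.sum_congr rfl fun j hj => ?_
          simp at hj
          rw [if_neg (by omega)]
        simp only [e2, if_true]
        push_cast
        rw [Finset.sum_range_succ, Finset.sum_range_succ]
        simp only [mul_sub, Finset.sum_sub_distrib] at hc
        rw [hdd] at hc
        linear_combination hc
  exact key t 0 (by omega)
end

section
/- There is no infinite run of the p-adic Jacobi–Perron algorithm whose input consists of rational numbers: if α_n^{(i)} ∈ ℚ_p and a_n^{(i)} (n ≥ 0, i = 1,…,m) form an infinite run of the algorithm, then at least one of α_0^{(1)}, …, α_0^{(m)} is not in the image of ℚ in ℚ_p. Equivalently, for every rational input (α_0^{(1)}, …, α_0^{(m)}) ∈ ℚ^m the p-adic Jacobi–Perron algorithm terminates in a finite number of steps. -/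
open Finset Filter

lemma InZInvP.sub_mul {p : ℕ} (hp : p ≠ 0) {a b c : ℚ} (ha : InZInvP p a) (hb : InZInvP p b)
    (hc : InZInvP p c) : InZInvP p (a - b * c) := by
  obtain ⟨z, k, rfl⟩ := ha
  obtain ⟨w, l, rfl⟩ := hb
  obtain ⟨v, j, rfl⟩ := hc
  have hp' : (p : ℚ) ≠ 0 := by exact_mod_cast hp
  refine ⟨z * p ^ (l + j) - w * v * p ^ k, k + (l + j), ?_⟩
  push_cast
  field_simp
  ring

lemma pow_le_abs_of_inZInvP {p : ℕ} [hp : Fact p.Prime] {u : ℚ} (hu : InZInvP p u) (h0 : u ≠ 0)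
    (n : ℕ) (hn : ‖(u : ℚ_[p])‖ ≤ (p : ℝ) ^ (-(n : ℤ))) : (p : ℚ) ^ n ≤ |u| := by
  obtain ⟨z, k, rfl⟩ := hu
  have hp0 : (0 : ℚ) < p := by exact_mod_cast hp.out.pos
  have hpR : (0 : ℝ) < p := by exact_mod_cast hp.out.pos
  have hz : z ≠ 0 := by rintro rfl; simp at h0
  have h1 : ‖(z : ℚ_[p])‖ ≤ (p : ℝ) ^ (-((n + k : ℕ) : ℤ)) := by
    have : (z : ℚ_[p]) = (((z : ℚ) / (p : ℚ) ^ k : ℚ) : ℚ_[p]) * (p : ℚ_[p]) ^ k := by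
      have : (p : ℚ_[p]) ≠ 0 := by exact_mod_cast hp.out.ne_zero
      push_cast
      field_simp
    rw [this, norm_mul, norm_pow, Padic.norm_p]
    calc _ ≤ (p : ℝ) ^ (-(n : ℤ)) * ((p : ℝ)⁻¹) ^ k := by gcongr
      _ = _ := by
        rw [← zpow_natCast, inv_zpow', ← zpow_add₀ hpR.ne']
        congr 1
        push_cast
        ring
  rw [Padic.norm_int_le_pow_iff_dvd] at h1
  have h2 : (p : ℤ) ^ (n + k) ≤ |z| :=
    Int.le_of_dvd (abs_pos.mpr hz) ((dvd_abs _ _).mpr (by exact_mod_cast h1))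
  rw [abs_div, abs_of_pos (pow_pos hp0 k), le_div_iff₀ (pow_pos hp0 k), ← pow_add]
  exact_mod_cast h2

/-- There is no infinite run of the `p`-adic Jacobi–Perron algorithm whose
input is rational: for an infinite run, at least one of `α₀⁽¹⁾, …, α₀⁽ᵐ⁾` is not in the image
of `ℚ` in `ℚ_p`. -/
theorem jacobiPerron_rational_input_terminates (p m : ℕ) [hp : Fact p.Prime]
    (hp2 : 2 < p) (hm : 1 ≤ m)
    (α : ℕ → ℕ → ℚ_[p]) (a : ℕ → ℕ → ℚ)
    (hrun : JPRun p m α a) :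
    ∃ i ∈ Finset.Icc 1 m, α 0 i ∉ Set.range ((↑) : ℚ → ℚ_[p]) := by
  by_contra hcon
  push Not at hcon
  have hmm : m ∈ Finset.Icc 1 m := Finset.mem_Icc.mpr ⟨hm, le_rfl⟩
  have hrat : ∀ n i, i ∈ Finset.Icc 1 m → ∃ r : ℚ, (r : ℚ_[p]) = α n i := by
    intro n
    induction n with
    | zero => exact hcon
    | succ n ih =>
      intro i hi
      obtain ⟨-, -, h1, h2⟩ := hrun n
      obtain ⟨s, hs⟩ := ih m hmm
      rw [Finset.mem_Icc] at hi
      rcases hi.1.eq_or_lt with rfl | hlt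
      · refine ⟨(s - a n m)⁻¹, ?_⟩
        rw [h1, ← hs]; push_cast; rfl
      · obtain ⟨t, ht⟩ := ih (i - 1) (Finset.mem_Icc.mpr ⟨by omega, by omega⟩)
        refine ⟨(t - a n (i - 1)) / (s - a n m), ?_⟩
        rw [h2 i (Finset.mem_Icc.mpr ⟨hlt, hi.2⟩), ← hs, ← ht]; push_cast; rfl
  choose! r hr using hrat
  have hp0 : p ≠ 0 := hp.out.ne_zero
  have hpR : (1 : ℝ) < p := by exact_mod_cast hp.out.one_lt
  -- common denominator
  obtain ⟨D, hD0, hD⟩ : ∃ D : ℕ, D ≠ 0 ∧ ∀ i ∈ Finset.Icc 1 m, InZInvP p (D * r 0 i) := by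
    refine ⟨∏ i ∈ Finset.Icc 1 m, (r 0 i).den, Finset.prod_ne_zero_iff.mpr fun i _ => (r 0 i).den_nz,
      fun i hi => ?_⟩
    obtain ⟨c, hc⟩ := Finset.dvd_prod_of_mem (fun i => (r 0 i).den) hi
    refine ⟨c * (r 0 i).num, 0, ?_⟩
    rw [hc]
    have := Rat.den_mul_eq_num (r 0 i)
    push_cast
    rw [← this]
    ring
  -- common bound
  obtain ⟨C, hC1, hC⟩ : ∃ C : ℚ, 1 ≤ C ∧ ∀ i ∈ Finset.Icc 1 m, |r 0 i| ≤ C := by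
    refine ⟨1 + ∑ i ∈ Finset.Icc 1 m, |r 0 i|, ?_, fun i hi => ?_⟩
    · have : 0 ≤ ∑ i ∈ Finset.Icc 1 m, |r 0 i| := Finset.sum_nonneg fun i _ => abs_nonneg _
      linarith
    · have := Finset.single_le_sum (f := fun i => |r 0 i|) (fun i _ => abs_nonneg _) hi
      linarith
  set q : ℚ := (p : ℚ) / 2 + 1 with hq
  have hpq : (2 : ℚ) < p := by exact_mod_cast hp2
  have hqpos : 0 < q := by positivity
  have key : ∀ n : ℕ, ∃ y : ℚ, y ≠ 0 ∧ ‖(y : ℚ_[p])‖ ≤ (p : ℝ) ^ (-(n : ℤ)) ∧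
      InZInvP p (D * y) ∧ (∀ i ∈ Finset.Icc 1 m, InZInvP p (D * (r n i * y))) ∧
      |y| ≤ C * q ^ n ∧ ∀ i ∈ Finset.Icc 1 m, |r n i * y| ≤ C * q ^ n := by
    intro n
    induction n with
    | zero =>
      refine ⟨1, one_ne_zero, by simp, ⟨D, 0, by simp⟩, ?_, by simpa using hC1, ?_⟩
      · simpa using hD
      · simpa using hC
    | succ n ih =>
      obtain ⟨y, hy0, hyn, hyz, hxz, hyb, hxb⟩ := ih
      obtain ⟨hs, hne, h1, h2⟩ := hrun n
      have hne' : r n m - a n m ≠ 0 := by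
        intro h
        apply hne
        rw [← hr n m hmm, sub_eq_zero.mp h]
      have e1 : r (n + 1) 1 = (r n m - a n m)⁻¹ := by
        have : ((r (n + 1) 1 : ℚ) : ℚ_[p]) = (((r n m - a n m)⁻¹ : ℚ) : ℚ_[p]) := by
          rw [hr (n + 1) 1 (Finset.mem_Icc.mpr ⟨le_rfl, hm⟩), h1, ← hr n m hmm]; push_cast; rfl
        exact_mod_cast this
      have e2 : ∀ i ∈ Finset.Icc 2 m,
          r (n + 1) i = (r n (i - 1) - a n (i - 1)) / (r n m - a n m) := by
        intro i hi
        have hi' := Finset.mem_Icc.mp hi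
        have : ((r (n + 1) i : ℚ) : ℚ_[p]) =
            (((r n (i - 1) - a n (i - 1)) / (r n m - a n m) : ℚ) : ℚ_[p]) := by
          rw [hr (n + 1) i (Finset.mem_Icc.mpr ⟨by omega, hi'.2⟩), h2 i hi, ← hr n m hmm,
            ← hr n (i - 1) (Finset.mem_Icc.mpr ⟨by omega, by omega⟩)]
          push_cast; rfl
        exact_mod_cast this
      -- the generic step
      have stepz : ∀ i ∈ Finset.Icc 1 m, InZInvP p (D * ((r n i - a n i) * y)) := by
        intro i hi
        have := InZInvP.sub_mul hp0 (hxz i hi) (hs i hi).1 hyz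
        convert this using 1
        ring
      have stepb : ∀ i ∈ Finset.Icc 1 m, |(r n i - a n i) * y| ≤ C * q ^ (n + 1) := by
        intro i hi
        have ha := (hs i hi).2.1
        calc |(r n i - a n i) * y| = |r n i * y - a n i * y| := by rw [sub_mul]
          _ ≤ |r n i * y| + |a n i * y| := abs_sub _ _
          _ = |r n i * y| + |a n i| * |y| := by rw [abs_mul (a n i)]
          _ ≤ C * q ^ n + (p : ℚ) / 2 * (C * q ^ n) := by
            have := hxb i hi
            gcongr
          _ = C * q ^ (n + 1) := by rw [pow_succ, hq]; ring
      refine ⟨(r n m - a n m) * y, mul_ne_zero hne' hy0, ?_, stepz m hmm, ?_, stepb m hmm, ?_⟩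
      · have hlt := (hs m hmm).2.2
        rw [← hr n m hmm] at hlt
        have hle : ‖((r n m : ℚ) : ℚ_[p]) - ((a n m : ℚ) : ℚ_[p])‖ ≤ (p : ℝ) ^ (-1 : ℤ) := by
          rw [Padic.norm_le_pow_iff_norm_lt_pow_add_one]
          simpa using hlt
        push_cast
        rw [norm_mul]
        calc _ ≤ (p : ℝ) ^ (-1 : ℤ) * (p : ℝ) ^ (-(n : ℤ)) := by gcongr
          _ = _ := by
            rw [← zpow_add₀ (by positivity)]
            congr 1
            ring
      · intro i hi
        rw [Finset.mem_Icc] at hi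
        rcases hi.1.eq_or_lt with rfl | hlt
        · rw [e1, inv_mul_cancel_left₀ hne']; exact hyz
        · rw [e2 i (Finset.mem_Icc.mpr ⟨hlt, hi.2⟩), ← mul_assoc (_ / _), div_mul_cancel₀ _ hne']
          exact stepz _ (Finset.mem_Icc.mpr ⟨by omega, by omega⟩)
      · intro i hi
        rw [Finset.mem_Icc] at hi
        rcases hi.1.eq_or_lt with rfl | hlt
        · rw [e1, inv_mul_cancel_left₀ hne']
          refine hyb.trans ?_
          have hq1 : 1 ≤ q := by rw [hq]; linarith
          gcongr
          omega
        · rw [e2 i (Finset.mem_Icc.mpr ⟨hlt, hi.2⟩), ← mul_assoc (_ / _), div_mul_cancel₀ _ hne']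
          exact stepb _ (Finset.mem_Icc.mpr ⟨by omega, by omega⟩)
  have hDq : (D : ℚ) ≠ 0 := by exact_mod_cast hD0
  have final : ∀ n : ℕ, (p : ℚ) ^ n ≤ D * C * q ^ n := by
    intro n
    obtain ⟨y, hy0, hyn, hyz, -, hyb, -⟩ := key n
    have := pow_le_abs_of_inZInvP hyz (mul_ne_zero hDq hy0) n (by
      push_cast
      rw [norm_mul]
      have h1 : ‖(D : ℚ_[p])‖ ≤ 1 := by exact_mod_cast Padic.norm_int_le_one (p := p) (D : ℤ)
      calc _ ≤ 1 * ‖(y : ℚ_[p])‖ := by gcongr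
        _ ≤ _ := by rwa [one_mul])
    refine this.trans ?_
    rw [abs_mul, Nat.abs_cast, mul_assoc]
    gcongr
  have hgt : 1 < (p : ℚ) / q := by
    rw [one_lt_div hqpos, hq]; linarith
  obtain ⟨n, hn⟩ := pow_unbounded_of_one_lt ((D : ℚ) * C) hgt
  have := final n
  rw [div_pow, lt_div_iff₀ (pow_pos hqpos n)] at hn
  linarith
end
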